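/- Let γ ∈ ℝ, let q ≥ 3 be fixed, and let K be a location-scale invariant kernel, not everywhere constant, such that E[|K((Z_{q−j:q−1})_{j=1}^{q})|^p] < ∞ for all p > 0, where Z_1,…,Z_{q−1} are iid standard GP(γ) and Z_{0:q−1} := 0. With ζ_{m,1} = cov(K_m(Z_S), K_m(Z_{S'})) for iid GP(γ) random variables indexed by sets S, S' with |S| = |S'| = m and |S ∩ S'| = 1, one has lim_{m→∞} m ζ_{m,1} = ∫_0^∞ (E[ K̄_{q+1}((Z_{q−j:q−1})_{j=1}^{q}, h_γ(S_q/x)) ])² dx =: σ²_K(γ), where K̄_{q+1} = K_{q+1} − θ with θ = E[K((Z_{q−j:q−1})_{j=1}^{q})], h_γ(y) = (y^γ − 1)/γ (= ln y if γ = 0), and S_q is an Erlang(q) random variable independent of Z_1,…,Z_{q−1}. -/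

import Mathlib

open MeasureTheory ProbabilityTheory Filter Real Set Topology
open scoped ENNReal NNReal Classical

noncomputable section

/-- The `j`-th largest entry of the tuple `x` (`j = 0` gives the maximum, `j = 1` the
second largest, ...); `0` when `j` is out of range. -/
def descStat {m : ℕ} (x : Fin m → ℝ) (j : ℕ) : ℝ :=
  if h : j < m then (x ∘ Tuple.sort x) ⟨m - 1 - j, by omega⟩ else 0

/-- The kernel of degree `m` obtained from `K` by applying it to the top-`q`
(descending) order statistics: `K_m(x_1,…,x_m) = K(x_{m:m},…,x_{m−q+1:m})`. -/
def Km {q : ℕ} (K : (Fin q → ℝ) → ℝ) (m : ℕ) (x : Fin m → ℝ) : ℝ :=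
  K fun j => descStat x (j : ℕ)

/-- `K(a x_1 + b, …, a x_q + b) = K(x_1, …, x_q)` for all `a > 0`, `b ∈ ℝ`. -/
def LocScaleInvariant {q : ℕ} (K : (Fin q → ℝ) → ℝ) : Prop :=
  ∀ a b : ℝ, 0 < a → ∀ x : Fin q → ℝ, K (fun j => a * x j + b) = K x

/-- `h_γ(y) = (y^γ - 1)/γ`, interpreted as `log y` when `γ = 0`. -/
def hGamma (γ : ℝ) (y : ℝ) : ℝ := if γ = 0 then Real.log y else (y ^ γ - 1) / γ

lemma measurable_hGamma (γ : ℝ) : Measurable (hGamma γ) := by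
  unfold hGamma
  split_ifs
  · exact Real.measurable_log
  · fun_prop

/-- The uniform distribution on `(0,1)`. -/
def unif01 : Measure ℝ := volume.restrict (Set.Ioo (0:ℝ) 1)

instance : IsProbabilityMeasure unif01 := ⟨by simp [unif01]⟩

/-- The standard Pareto(1) distribution, with cdf `1 - 1/y` for `y ≥ 1`. -/
def pareto1 : Measure ℝ := ProbabilityTheory.paretoMeasure 1 1

instance : IsProbabilityMeasure pareto1 :=
  ProbabilityTheory.isProbabilityMeasure_paretoMeasure one_pos one_pos

/-- The standard generalized Pareto distribution `GP(γ)`: the law of `h_γ(Y)` for `Y`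
standard Pareto(1). -/
def gpMeasure (γ : ℝ) : Measure ℝ := pareto1.map (hGamma γ)

instance (γ : ℝ) : IsProbabilityMeasure (gpMeasure γ) :=
  Measure.isProbabilityMeasure_map (measurable_hGamma γ).aemeasurable

/-- The unit exponential distribution: the law of `-log U` for `U` uniform on `(0,1)`. -/
def expMeasure1 : Measure ℝ := unif01.map fun u => -Real.log u

instance : IsProbabilityMeasure expMeasure1 :=
  Measure.isProbabilityMeasure_map Real.measurable_log.neg.aemeasurable

/-- The Erlang(q) distribution: the law of the sum of `q` independent unit exponentials. -/
def erlangMeasure (q : ℕ) : Measure ℝ :=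
  (Measure.pi fun _ : Fin q => expMeasure1).map fun e => ∑ i, e i

instance (q : ℕ) : IsProbabilityMeasure (erlangMeasure q) :=
  Measure.isProbabilityMeasure_map
    (Finset.measurable_sum _ fun i _ => measurable_pi_apply i).aemeasurable

/-- The joint law of `r` iid `GP(γ)` random variables. -/
def gpPi (γ : ℝ) (r : ℕ) : Measure (Fin r → ℝ) := Measure.pi fun _ => gpMeasure γ

instance (γ : ℝ) (r : ℕ) : IsProbabilityMeasure (gpPi γ r) := by
  unfold gpPi; infer_instance

/-- The vector `(Z_{q-j:q-1})_{j=1}^{q}`: the descending order statistics of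
`z_1,…,z_{q-1}` with an extra last entry `Z_{0:q-1} := 0`. -/
def refVec {q : ℕ} (z : Fin (q-1) → ℝ) : Fin q → ℝ := fun j => descStat z (j : ℕ)

/-- `θ = E[K((Z_{q-j:q-1})_{j=1}^{q})]` for iid `GP(γ)` variables `Z_1,…,Z_{q-1}`. -/
def thetaK (γ : ℝ) {q : ℕ} (K : (Fin q → ℝ) → ℝ) : ℝ :=
  ∫ z, K (refVec z) ∂(gpPi γ (q-1))

/-- all moments of `K((Z_{q-j:q-1})_{j=1}^{q})` are finite. -/
def MomentCond (γ : ℝ) {q : ℕ} (K : (Fin q → ℝ) → ℝ) : Prop :=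
  ∀ p : ℝ, 0 < p →
    ∫⁻ z, ENNReal.ofReal (|K (refVec z)| ^ p) ∂(gpPi γ (q-1)) < ⊤

/-- The asymptotic variance
`σ²_K(γ) = ∫_0^∞ (E[K̄_{q+1}((Z_{q-j:q-1})_{j=1}^q, h_γ(S_q/x))])² dx`. -/
def sigmaSqK (γ : ℝ) {q : ℕ} (K : (Fin q → ℝ) → ℝ) : ℝ :=
  ∫ x in Set.Ioi (0:ℝ),
    (∫ zs : (Fin (q-1) → ℝ) × ℝ,
        (Km K (q+1) (Fin.snoc (refVec zs.1) (hGamma γ (zs.2 / x))) - thetaK γ K)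
      ∂((gpPi γ (q-1)).prod (erlangMeasure q))) ^ 2

/-- The U-statistic with kernel `K_m` evaluated on the sample `z`. -/
def UStat {q : ℕ} (K : (Fin q → ℝ) → ℝ) (m n : ℕ) (z : Fin n → ℝ) : ℝ :=
  ((n.choose m : ℝ))⁻¹ *
    ∑ I ∈ Finset.powersetCard m (Finset.univ : Finset (Fin n)),
      Km K I.card fun j => z (I.orderIsoOfFin rfl j).1

/-- Condition on the degree sequence: `m = o(n^{1-ε})` and `log n = o(m^{1-δ})`. -/
def DegreeCond (m : ℕ → ℕ) : Prop :=
  ∃ ε > (0:ℝ), ∃ δ > (0:ℝ),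
    Tendsto (fun n => (m n : ℝ) / (n : ℝ) ^ (1 - ε)) atTop (𝓝 0) ∧
    Tendsto (fun n : ℕ => Real.log n / (m n : ℝ) ^ (1 - δ)) atTop (𝓝 0)

/-- `ζ_{m,ℓ} = cov(K_m(Z_S), K_m(Z_{S'}))` for the blocks `S = [1:m]`,
`S' = [(m-ℓ+1):(2m-ℓ)]` (zero-indexed here), which overlap in `ℓ` indices. -/
def zetaCov {Ω : Type*} [MeasurableSpace Ω] (P : Measure Ω) {q : ℕ}
    (K : (Fin q → ℝ) → ℝ) (Z : ℕ → Ω → ℝ) (m ℓ : ℕ) : ℝ :=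
  (∫ ω, Km K m (fun i : Fin m => Z i ω) * Km K m (fun i : Fin m => Z (m - ℓ + i) ω) ∂P)
    - (∫ ω, Km K m (fun i : Fin m => Z i ω) ∂P)
      * (∫ ω, Km K m (fun i : Fin m => Z (m - ℓ + i) ω) ∂P)

/-- Convergence in distribution to a Gaussian, expressed via pointwise convergence of
the cumulative distribution functions (the Gaussian cdf being continuous). -/
def TendstoGaussian {Ω : Type*} [MeasurableSpace Ω] (P : Measure Ω)
    (T : ℕ → Ω → ℝ) (μ : ℝ) (v : ℝ≥0) : Prop :=
  ∀ x : ℝ, Tendsto (fun n => (P {ω | T n ω ≤ x}).toReal) atTop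
    (𝓝 ((gaussianReal μ v (Set.Iic x)).toReal))

/-- Convergence in probability to the constant `c`. -/
def TendstoInProb {Ω : Type*} [MeasurableSpace Ω] (P : Measure Ω)
    (T : ℕ → Ω → ℝ) (c : ℝ) : Prop :=
  ∀ ε : ℝ, 0 < ε → Tendsto (fun n => (P {ω | ε ≤ |T n ω - c|}).toReal) atTop (𝓝 0)



/-- number of entries at least `t` -/
def cnt {m : ℕ} (x : Fin m → ℝ) (t : ℝ) : ℕ := ∑ i, if t ≤ x i then 1 else 0

lemma cnt_perm {m : ℕ} (x : Fin m → ℝ) (σ : Equiv.Perm (Fin m)) (t : ℝ) :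
    cnt (x ∘ σ) t = cnt x t :=
  Equiv.sum_comp σ (fun i => if t ≤ x i then 1 else 0)

lemma cnt_cons {m : ℕ} (x : Fin m → ℝ) (a t : ℝ) :
    cnt (Fin.cons a x : Fin (m+1) → ℝ) t = (if t ≤ a then 1 else 0) + cnt x t := by
  unfold cnt
  rw [Fin.sum_univ_succ]
  simp only [Fin.cons_zero, Fin.cons_succ]

lemma cnt_snoc {m : ℕ} (x : Fin m → ℝ) (a t : ℝ) :
    cnt (Fin.snoc x a : Fin (m+1) → ℝ) t = cnt x t + (if t ≤ a then 1 else 0) := by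
  unfold cnt
  rw [Fin.sum_univ_castSucc]
  simp only [Fin.snoc_castSucc, Fin.snoc_last]

lemma cnt_le {m : ℕ} (x : Fin m → ℝ) (t : ℝ) : cnt x t ≤ m := by
  unfold cnt
  rw [← Finset.card_filter]
  exact (Finset.card_le_univ _).trans (by simp)

lemma cnt_eq_all {m : ℕ} (x : Fin m → ℝ) (t : ℝ) (h : ∀ i, t ≤ x i) : cnt x t = m := by
  simp [cnt, h]

lemma cnt_mono {m : ℕ} (x y : Fin m → ℝ) (t s : ℝ) (h : ∀ i, t ≤ x i → s ≤ y i) :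
    cnt x t ≤ cnt y s := by
  unfold cnt
  apply Finset.sum_le_sum
  intro i _
  by_cases h1 : t ≤ x i
  · simp [h1, h i h1]
  · simp [h1]

lemma cnt_congr {m : ℕ} (x y : Fin m → ℝ) (t s : ℝ) (h : ∀ i, t ≤ x i ↔ s ≤ y i) :
    cnt x t = cnt y s :=
  le_antisymm (cnt_mono _ _ _ _ fun i => (h i).1) (cnt_mono _ _ _ _ fun i => (h i).2)

lemma le_descStat_iff {m : ℕ} (x : Fin m → ℝ) (j : ℕ) (hj : j < m) (t : ℝ) :
    t ≤ descStat x j ↔ j < cnt x t := by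
  rw [← cnt_perm x (Tuple.sort x)]
  have hmono : Monotone (x ∘ Tuple.sort x) := Tuple.monotone_sort x
  unfold descStat
  rw [dif_pos hj]
  set s := x ∘ Tuple.sort x
  unfold cnt
  rw [← Finset.card_filter]
  constructor
  · intro h
    have : Finset.Ici (⟨m - 1 - j, by omega⟩ : Fin m) ⊆ ({i | t ≤ s i} : Finset (Fin m)) := by
      intro i hi
      simp only [Finset.mem_filter, Finset.mem_univ, true_and]
      exact h.trans (hmono (Finset.mem_Ici.1 hi))
    have := Finset.card_le_card this
    rw [Fin.card_Ici] at this
    simp only at this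
    omega
  · intro h
    by_contra hc
    have : ({i | t ≤ s i} : Finset (Fin m)) ⊆ Finset.Ioi (⟨m - 1 - j, by omega⟩ : Fin m) := by
      intro i hi
      simp only [Finset.mem_filter, Finset.mem_univ, true_and] at hi
      rw [Finset.mem_Ioi]
      by_contra h2
      exact hc (hi.trans (hmono (not_lt.1 h2)))
    have := Finset.card_le_card this
    rw [Fin.card_Ioi] at this
    simp only at this
    omega

lemma descStat_eq {m n : ℕ} (x : Fin m → ℝ) (y : Fin n → ℝ) (j : ℕ) (hj : j < m) (hj' : j < n)
    (h : ∀ t, j < cnt x t ↔ j < cnt y t) : descStat x j = descStat y j := by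
  apply eq_of_forall_le_iff
  intro t
  rw [le_descStat_iff x j hj, le_descStat_iff y j hj', h]

lemma Km_congr {q : ℕ} (K : (Fin q → ℝ) → ℝ) {m n : ℕ} (hm : q ≤ m) (hn : q ≤ n)
    (x : Fin m → ℝ) (y : Fin n → ℝ) (h : ∀ t, ∀ j < q, (j < cnt x t ↔ j < cnt y t)) :
    Km K m x = Km K n y := by
  unfold Km
  congr 1
  funext j
  exact descStat_eq x y j (by omega) (by omega) (fun t => h t j j.2)

lemma Km_affine {q : ℕ} (K : (Fin q → ℝ) → ℝ) (hLS : LocScaleInvariant K) {m : ℕ} (hm : q ≤ m)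
    (x : Fin m → ℝ) (a b : ℝ) (ha : 0 < a) :
    Km K m (fun i => a * x i + b) = Km K m x := by
  unfold Km
  rw [← hLS a b ha (fun j => descStat x j)]
  congr 1
  funext j
  apply eq_of_forall_le_iff
  intro t
  rw [le_descStat_iff _ _ (by omega)]
  have : t ≤ a * descStat x j + b ↔ (t - b) / a ≤ descStat x j := by
    rw [div_le_iff₀ ha]; constructor <;> intro h <;> linarith
  rw [this, le_descStat_iff _ _ (by omega)]
  rw [cnt_congr]
  intro i
  rw [div_le_iff₀ ha]; constructor <;> intro h <;> linarith

lemma measurable_descStat {m : ℕ} (j : ℕ) :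
    Measurable (fun x : Fin m → ℝ => descStat x j) := by
  by_cases hj : j < m
  · apply measurable_of_Ici
    intro t
    have : (fun x : Fin m → ℝ => descStat x j) ⁻¹' Ici t = {x | j < cnt x t} := by
      ext x; simp [le_descStat_iff x j hj]
    rw [this]
    apply measurableSet_lt measurable_const
    unfold cnt
    apply Finset.measurable_sum
    intro i _
    exact Measurable.ite (measurableSet_le measurable_const (measurable_pi_apply i))
      measurable_const measurable_const
  · simp [descStat, hj]

lemma measurable_Km {q : ℕ} (K : (Fin q → ℝ) → ℝ) (hK : Measurable K) (m : ℕ) :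
    Measurable (Km K m) := by
  unfold Km
  exact hK.comp (measurable_pi_lambda _ fun j => measurable_descStat _)

lemma cnt_descStat {m : ℕ} (x : Fin m → ℝ) (t : ℝ) :
    cnt (fun j : Fin m => descStat x j) t = cnt x t := by
  have : (fun j : Fin m => descStat x j) = x ∘ (Fin.revPerm.trans (Tuple.sort x)) := by
    funext j
    simp only [descStat, j.2, dif_pos, Function.comp, Equiv.trans_apply, Fin.revPerm_apply]
    congr 2
    ext
    simp [Fin.rev]; omega
  rw [this, cnt_perm]

/-- refVec as the order statistics of the vector with a `0` added -/
lemma refVec_eq {r : ℕ} (z : Fin r → ℝ) (hz : ∀ i, 0 ≤ z i) :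
    (refVec (q := r+1) z) = fun j : Fin (r+1) => descStat (Fin.cons 0 z : Fin (r+1) → ℝ) j := by
  funext j
  unfold refVec
  apply eq_of_forall_le_iff
  intro t
  rw [le_descStat_iff _ _ j.2, cnt_cons]
  by_cases hj : (j : ℕ) < r
  · have := le_descStat_iff z j hj t
    refine this.trans ?_
    by_cases h0 : t ≤ 0
    · rw [cnt_eq_all z t (fun i => h0.trans (hz i))]; simp [h0]; omega
    · simp [h0]
  · have hj' : (j : ℕ) = r := by omega
    have : descStat z (j:ℕ) = 0 := by simp [descStat, hj']
    refine (show t ≤ descStat z (j:ℕ) ↔ t ≤ 0 by rw [this]).trans ?_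
    by_cases h0 : t ≤ 0
    · rw [cnt_eq_all z t (fun i => h0.trans (hz i))]; simp [h0]; omega
    · have := cnt_le z t
      simp [h0]; omega

/-! ### the function hGamma -/

lemma hGamma_mul (γ c y : ℝ) (hc : 0 < c) (hy : 0 < y) :
    hGamma γ (c * y) = c ^ γ * hGamma γ y + hGamma γ c := by
  unfold hGamma
  split_ifs with h
  · subst h; rw [Real.log_mul hc.ne' hy.ne']; simp; ring
  · rw [Real.mul_rpow hc.le hy.le]; field_simp; ring

lemma hGamma_one (γ : ℝ) : hGamma γ 1 = 0 := by simp [hGamma]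

lemma hGamma_nonneg (γ c : ℝ) (hc : 1 ≤ c) : 0 ≤ hGamma γ c := by
  unfold hGamma
  split_ifs with h
  · exact Real.log_nonneg hc
  · rcases lt_or_gt_of_ne h with h | h
    · apply div_nonneg_of_nonpos
      · have := Real.rpow_le_one_of_one_le_of_nonpos hc h.le; linarith
      · exact h.le
    · apply div_nonneg
      · have := Real.one_le_rpow hc h.le; linarith
      · exact h.le

lemma hGamma_mono (γ a b : ℝ) (ha : 0 < a) (hab : a ≤ b) : hGamma γ a ≤ hGamma γ b := by
  have : b = a * (b / a) := by field_simp
  rw [this, hGamma_mul γ a (b/a) ha (div_pos (ha.trans_le hab) ha)]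
  have h1 := hGamma_nonneg γ (b/a) ((one_le_div ha).2 hab)
  have h2 := Real.rpow_pos_of_pos ha γ
  have := mul_nonneg h2.le h1
  linarith

/-! ### the kernel in uniform coordinates -/

/-- kernel in uniform coordinates -/
def kk (γ : ℝ) {q : ℕ} (K : (Fin q → ℝ) → ℝ) (n : ℕ) (u : Fin n → ℝ) : ℝ :=
  Km K n (fun i => hGamma γ (u i)⁻¹)

lemma measurable_kk (γ : ℝ) {q : ℕ} (K : (Fin q → ℝ) → ℝ) (hK : Measurable K) (n : ℕ) :
    Measurable (kk γ K n) :=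
  (measurable_Km K hK n).comp (measurable_pi_lambda _ fun i =>
    (measurable_hGamma γ).comp (measurable_pi_apply i).inv)

lemma kk_perm (γ : ℝ) {q : ℕ} (K : (Fin q → ℝ) → ℝ) (n : ℕ) (hn : q ≤ n) (u : Fin n → ℝ)
    (σ : Equiv.Perm (Fin n)) : kk γ K n (u ∘ σ) = kk γ K n u := by
  unfold kk
  apply Km_congr K hn hn
  intro t j _
  have := cnt_perm (fun i => hGamma γ (u i)⁻¹) σ t
  rw [← this]; rfl

lemma hcons (γ : ℝ) {n : ℕ} (a : ℝ) (u : Fin n → ℝ) :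
    (fun i => hGamma γ ((Fin.cons a u : Fin (n+1) → ℝ) i)⁻¹)
      = Fin.cons (hGamma γ a⁻¹) (fun i => hGamma γ (u i)⁻¹) := by
  funext i
  refine Fin.cases ?_ (fun i => ?_) i <;> simp

lemma kk_cons_perm (γ : ℝ) {q : ℕ} (K : (Fin q → ℝ) → ℝ) (n : ℕ) (hn : q ≤ n + 1) (x : ℝ)
    (u : Fin n → ℝ)
    (σ : Equiv.Perm (Fin n)) : kk γ K (n+1) (Fin.cons x (u ∘ σ)) = kk γ K (n+1) (Fin.cons x u) := by
  unfold kk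
  apply Km_congr K hn hn
  intro t j _
  have := cnt_perm (fun i => hGamma γ (u i)⁻¹) σ t
  rw [hcons, hcons, cnt_cons, cnt_cons, ← this]; rfl

lemma kk_scale (γ : ℝ) {q : ℕ} (K : (Fin q → ℝ) → ℝ) (hLS : LocScaleInvariant K) (n : ℕ)
    (hn : q ≤ n) (c : ℝ) (hc : 0 < c) (u : Fin n → ℝ) (hu : ∀ i, 0 < u i) :
    kk γ K n (fun i => c * u i) = kk γ K n u := by
  unfold kk
  rw [← Km_affine K hLS hn (fun i => hGamma γ (u i)⁻¹) ((c⁻¹)^γ) (hGamma γ c⁻¹) (Real.rpow_pos_of_pos (inv_pos.2 hc) _)]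
  congr 1
  funext i
  rw [mul_inv, hGamma_mul γ _ _ (inv_pos.2 hc) (inv_pos.2 (hu i))]

/-- dropping the entry `1` -/
lemma kk_drop_one (γ : ℝ) {q : ℕ} (K : (Fin q → ℝ) → ℝ) (n : ℕ) (hn : q ≤ n) (x : ℝ)
    (u : Fin n → ℝ) (hu : ∀ i, 0 < u i ∧ u i < 1) :
    kk γ K (n+2) (Fin.cons x (Fin.cons 1 u)) = kk γ K (n+1) (Fin.cons x u) := by
  unfold kk
  apply Km_congr K (by omega) (by omega)
  intro t j hj
  rw [hcons, hcons, hcons, cnt_cons, cnt_cons, cnt_cons]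
  by_cases h : t ≤ hGamma γ 1⁻¹
  · rw [cnt_eq_all]
    · simp only [if_pos h]; (try split_ifs) <;> omega
    · intro i
      refine h.trans (hGamma_mono γ _ _ (by norm_num) ?_)
      have := hu i
      exact inv_anti₀ this.1 this.2.le
  · simp only [if_neg h, zero_add]

lemma kk_drop_one' (γ : ℝ) {q : ℕ} (K : (Fin q → ℝ) → ℝ) (n : ℕ) (hn : q ≤ n)
    (u : Fin n → ℝ) (hu : ∀ i, 0 < u i ∧ u i < 1) :
    kk γ K (n+1) (Fin.cons 1 u) = kk γ K n u := by
  unfold kk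
  apply Km_congr K (by omega) (by omega)
  intro t j hj
  rw [hcons, cnt_cons]
  by_cases h : t ≤ hGamma γ 1⁻¹
  · rw [cnt_eq_all]
    · simp only [if_pos h]; (try split_ifs) <;> omega
    · intro i
      refine h.trans (hGamma_mono γ _ _ (by norm_num) ?_)
      have := hu i
      exact inv_anti₀ this.1 this.2.le
  · simp only [if_neg h, zero_add]

/-- dropping the `1` when the other entry is smaller than `1` -/
lemma kk_drop_lt (γ : ℝ) {r : ℕ} (K : (Fin (r+1) → ℝ) → ℝ) (x : ℝ) (hx0 : 0 < x) (hx : x < 1)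
    (u : Fin r → ℝ) (hu : ∀ i, 0 < u i ∧ u i < 1) :
    kk γ K (r+2) (Fin.cons x (Fin.cons 1 u)) = kk γ K (r+1) (Fin.cons x u) := by
  unfold kk
  apply Km_congr K (by omega) (by omega)
  intro t j hj
  rw [hcons, hcons, hcons, cnt_cons, cnt_cons, cnt_cons]
  by_cases h : t ≤ hGamma γ 1⁻¹
  · have h2 : t ≤ hGamma γ x⁻¹ :=
      h.trans (hGamma_mono γ _ _ (by norm_num) (inv_anti₀ hx0 hx.le))
    rw [cnt_eq_all]
    · simp only [if_pos h, if_pos h2]; omega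
    · intro i
      refine h.trans (hGamma_mono γ _ _ (by norm_num) ?_)
      have := hu i
      exact inv_anti₀ this.1 this.2.le
  · simp only [if_neg h, zero_add]

/-- dropping the other entry when it is at least `1` -/
lemma kk_drop_ge (γ : ℝ) {r : ℕ} (K : (Fin (r+1) → ℝ) → ℝ) (x : ℝ) (hx : 1 ≤ x)
    (u : Fin r → ℝ) (hu : ∀ i, 0 < u i ∧ u i < 1) :
    kk γ K (r+2) (Fin.cons x (Fin.cons 1 u)) = kk γ K (r+1) (Fin.cons 1 u) := by
  unfold kk
  apply Km_congr K (by omega) (by omega)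
  intro t j hj
  rw [hcons, hcons, cnt_cons, cnt_cons]
  by_cases h : t ≤ hGamma γ x⁻¹
  · have h2 : t ≤ hGamma γ 1⁻¹ :=
      h.trans (hGamma_mono γ _ _ (by positivity) (inv_anti₀ one_pos hx))
    rw [cnt_eq_all]
    · simp only [if_pos h, if_pos h2]; omega
    · intro i
      refine h2.trans (hGamma_mono γ _ _ (by norm_num) ?_)
      have := hu i
      exact inv_anti₀ this.1 this.2.le
  · simp only [if_neg h, zero_add]

lemma K_refVec (γ : ℝ) {r : ℕ} (K : (Fin (r+1) → ℝ) → ℝ)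
    (u : Fin r → ℝ) (hu : ∀ i, 0 < u i ∧ u i < 1) :
    K (refVec (q := r+1) (fun i => hGamma γ (u i)⁻¹)) = kk γ K (r+1) (Fin.cons 1 u) := by
  rw [refVec_eq]
  · unfold kk Km
    rw [hcons]
    simp [hGamma_one]
  · intro i
    exact hGamma_nonneg _ _ ((one_le_inv₀ (hu i).1).2 (hu i).2.le)

lemma Km_refVec (γ : ℝ) {r : ℕ} (K : (Fin (r+1) → ℝ) → ℝ)
    (u : Fin r → ℝ) (hu : ∀ i, 0 < u i ∧ u i < 1) (s x : ℝ) :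
    Km K (r+1+1) (Fin.snoc (refVec (q := r+1) (fun i => hGamma γ (u i)⁻¹)) (hGamma γ (s / x)))
      = kk γ K (r+2) (Fin.cons (x/s) (Fin.cons 1 u)) := by
  rw [refVec_eq]
  · unfold kk
    rw [hcons, hcons]
    apply Km_congr K (by omega) (by omega)
    intro t j hj
    rw [cnt_snoc]
    erw [cnt_descStat]
    rw [cnt_cons, cnt_cons, cnt_cons]
    simp only [inv_one, hGamma_one, inv_div]
    rw [add_comm]
    exact Iff.rfl
  · intro i
    exact hGamma_nonneg _ _ ((one_le_inv₀ (hu i).1).2 (hu i).2.le)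


/-- product of uniforms -/
def lam (n : ℕ) : Measure (Fin n → ℝ) := Measure.pi fun _ => unif01

instance (n : ℕ) : IsProbabilityMeasure (lam n) := by unfold lam; infer_instance

lemma lam_eq (n : ℕ) : lam n = (volume : Measure (Fin n → ℝ)).restrict (Set.pi univ fun _ => Ioo 0 1) := by
  unfold lam unif01
  rw [volume_pi, Measure.restrict_pi_pi]

lemma lam_mem (n : ℕ) : ∀ᵐ u ∂(lam n), ∀ i, 0 < u i ∧ u i < 1 := by
  rw [lam_eq]
  filter_upwards [ae_restrict_mem (MeasurableSet.univ_pi fun _ => measurableSet_Ioo)] with u hu i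
  exact hu i (mem_univ i)

lemma lam_ne (n : ℕ) : ∀ᵐ u ∂(lam n), ∀ i j, i ≠ j → u i ≠ u j := by
  rw [ae_all_iff]; intro i
  rw [ae_all_iff]; intro j
  by_cases hij : i = j
  · simp [hij]
  rw [lam_eq]
  apply ae_restrict_of_ae
  let S : Submodule ℝ (Fin n → ℝ) := LinearMap.ker
    ((LinearMap.proj i : (Fin n → ℝ) →ₗ[ℝ] ℝ) - LinearMap.proj j)
  have hS : S ≠ ⊤ := by
    intro h
    have : (Pi.single i 1 : Fin n → ℝ) ∈ S := by rw [h]; trivial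
    simp only [S, LinearMap.mem_ker, LinearMap.sub_apply, LinearMap.proj_apply, Pi.single_eq_same] at this
    rw [Pi.single_eq_of_ne (Ne.symm hij)] at this
    norm_num at this
  have h0 := Measure.addHaar_submodule (volume : Measure (Fin n → ℝ)) S hS
  have : ∀ᵐ u ∂(volume : Measure (Fin n → ℝ)), u ∉ (S : Set (Fin n → ℝ)) := measure_eq_zero_iff_ae_notMem.1 h0
  filter_upwards [this] with u hu _ he
  apply hu
  simp [S, he]

lemma lam_perm (n : ℕ) (σ : Equiv.Perm (Fin n)) (F : (Fin n → ℝ) → ℝ≥0∞) :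
    ∫⁻ u, F (u ∘ σ) ∂(lam n) = ∫⁻ u, F u ∂(lam n) := by
  have h := measurePreserving_piCongrLeft (fun _ : Fin n => unif01) σ.symm
  have h2 := h.lintegral_comp_emb (MeasurableEquiv.measurableEmbedding _) F
  unfold lam
  rw [← h2]
  congr 1
  funext u
  congr 1
  funext i
  have := MeasurableEquiv.piCongrLeft_apply_apply (β := fun _ => ℝ) σ.symm u (σ i)
  simp only [Equiv.symm_apply_apply] at this
  rw [this]
  rfl

lemma lam_succ (n : ℕ) (F : (Fin (n+1) → ℝ) → ℝ≥0∞) (hF : Measurable F) :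
    ∫⁻ u, F u ∂(lam (n+1)) = ∫⁻ s, ∫⁻ v, F (Fin.cons s v) ∂(lam n) ∂unif01 := by
  have h := (measurePreserving_piFinSuccAbove (fun _ : Fin (n+1) => unif01) 0).symm
  have h2 := h.lintegral_comp_emb (MeasurableEquiv.measurableEmbedding _) F
  unfold lam
  rw [← h2, lintegral_prod]
  · simp [MeasurableEquiv.piFinSuccAbove]
    rfl
  · exact (hF.comp (MeasurableEquiv.measurable _)).aemeasurable

lemma vol_scale (n : ℕ) (s : ℝ) (hs : 0 < s) (F : (Fin n → ℝ) → ℝ≥0∞) (hF : Measurable F) :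
    ∫⁻ v, F v = ENNReal.ofReal (s^n) * ∫⁻ v : Fin n → ℝ, F (fun i => s * v i) := by
  have hmap := Measure.map_addHaar_smul (volume : Measure (Fin n → ℝ)) hs.ne'
  have h1 : ∫⁻ v, F v ∂(Measure.map (s • ·) (volume : Measure (Fin n → ℝ))) = ∫⁻ v, F (s • v) :=
    lintegral_map hF (measurable_const_smul s)
  rw [hmap, lintegral_smul_measure] at h1
  simp only [Module.finrank_fintype_fun_eq_card, Fintype.card_fin] at h1
  have h2 : ∫⁻ v : Fin n → ℝ, F (fun i => s * v i) = ∫⁻ v : Fin n → ℝ, F (s • v) := rfl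
  rw [h2, ← h1, smul_eq_mul, ← mul_assoc, ← ENNReal.ofReal_mul (by positivity),
    abs_of_pos (by positivity), mul_inv_cancel₀ (by positivity), ENNReal.ofReal_one, one_mul]

lemma lam_scale (n : ℕ) (s : ℝ) (hs : 0 < s) (hs1 : s < 1) (F : (Fin n → ℝ) → ℝ≥0∞) (hF : Measurable F) :
    ∫⁻ v in {v | ∀ i, v i < s}, F v ∂(lam n)
      = ENNReal.ofReal (s^n) * ∫⁻ v, F (fun i => s * v i) ∂(lam n) := by
  rw [lam_eq]
  have hm : MeasurableSet (Set.pi univ fun _ : Fin n => Ioo (0:ℝ) 1) := 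
    MeasurableSet.univ_pi fun _ => measurableSet_Ioo
  have hms : MeasurableSet {v : Fin n → ℝ | ∀ i, v i < s} := by
    rw [ofPred_forall]
    exact MeasurableSet.iInter fun i => measurableSet_lt (measurable_pi_apply i) measurable_const
  rw [Measure.restrict_restrict hms, ← lintegral_indicator (hms.inter hm), ← lintegral_indicator hm]
  have hmeas : Measurable (({v : Fin n → ℝ | ∀ i, v i < s} ∩ Set.pi univ fun _ => Ioo (0:ℝ) 1).indicator F) :=
    hF.indicator (hms.inter hm)
  rw [vol_scale n s hs _ hmeas]
  congr 1
  congr 1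
  funext v
  have : (fun i => s * v i) ∈ ({v : Fin n → ℝ | ∀ i, v i < s} ∩ Set.pi univ fun _ => Ioo (0:ℝ) 1) ↔
      v ∈ Set.pi univ fun _ : Fin n => Ioo (0:ℝ) 1 := by
    simp only [mem_inter_iff, mem_ofPred_eq, Set.mem_pi, mem_univ, true_imp_iff, mem_Ioo]
    constructor
    · rintro ⟨h1, h2⟩ i
      exact ⟨pos_of_mul_pos_right (h2 i).1 hs.le, by nlinarith [h1 i]⟩
    · intro h
      exact ⟨fun i => by nlinarith [h i], fun i => ⟨mul_pos hs (h i).1, by nlinarith [h i]⟩⟩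
  by_cases hv : v ∈ Set.pi univ fun _ : Fin n => Ioo (0:ℝ) 1
  · rw [indicator_of_mem hv, indicator_of_mem (this.2 hv)]
  · rw [indicator_of_notMem hv, indicator_of_notMem (fun h => hv (this.1 h))]

lemma polar (n : ℕ) (F : (Fin (n+1) → ℝ) → ℝ≥0∞) (hF : Measurable F)
    (hsym : ∀ (u) (σ : Equiv.Perm (Fin (n+1))), F (u ∘ σ) = F u) :
    ∫⁻ u, F u ∂(lam (n+1)) = (n+1 : ℝ≥0∞) * ∫⁻ s, ENNReal.ofReal (s^n) *
      ∫⁻ v, F (Fin.cons s (fun i => s * v i)) ∂(lam n) ∂unif01 := by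
  let A : Fin (n+1) → Set (Fin (n+1) → ℝ) := fun i => {u | ∀ j, j ≠ i → u j < u i}
  have hA : ∀ i, MeasurableSet (A i) := by
    intro i
    simp only [A, ofPred_forall]
    exact MeasurableSet.iInter fun j => MeasurableSet.iInter fun _ =>
      measurableSet_lt (measurable_pi_apply j) (measurable_pi_apply i)
  have h1 : ∀ᵐ u ∂(lam (n+1)), F u = ∑ i, (A i).indicator F u := by
    filter_upwards [lam_ne (n+1)] with u hu
    obtain ⟨i, -, hi⟩ := Finset.exists_max_image Finset.univ u ⟨0, Finset.mem_univ _⟩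
    rw [Finset.sum_eq_single i]
    · rw [indicator_of_mem]
      intro j hj
      exact lt_of_le_of_ne (hi j (Finset.mem_univ _)) (hu j i hj)
    · intro k _ hk
      rw [indicator_of_notMem]
      intro hmem
      exact absurd (hmem i (Ne.symm hk)) (not_lt.2 (hi k (Finset.mem_univ _)))
    · simp
  have h2 : ∀ i, ∫⁻ u, (A i).indicator F u ∂(lam (n+1)) = ∫⁻ u, (A 0).indicator F u ∂(lam (n+1)) := by
    intro i
    rw [← lam_perm (n+1) (Equiv.swap 0 i)]
    congr 1
    funext u
    have : u ∘ (Equiv.swap 0 i) ∈ A i ↔ u ∈ A 0 := by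
      simp only [A, mem_ofPred_eq, Function.comp]
      constructor
      · intro h j hj
        have := h (Equiv.swap 0 i j) (by
          intro h3; apply hj; rw [Equiv.swap_apply_eq_iff] at h3; simpa using h3)
        simpa using this
      · intro h j hj
        rw [Equiv.swap_apply_right]
        apply h
        intro h3; apply hj; rw [Equiv.swap_apply_eq_iff] at h3; simpa using h3
    by_cases hu : u ∈ A 0
    · rw [indicator_of_mem hu, indicator_of_mem (this.2 hu), hsym]
    · rw [indicator_of_notMem hu, indicator_of_notMem (fun h => hu (this.1 h))]
  rw [lintegral_congr_ae h1, lintegral_finsetSum _ (fun i _ => hF.indicator (hA i))]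
  rw [Finset.sum_congr rfl (fun i _ => h2 i)]
  rw [Finset.sum_const, Finset.card_univ, Fintype.card_fin, nsmul_eq_mul]
  push_cast
  congr 1
  rw [lam_succ n _ (hF.indicator (hA 0))]
  have hs01 : ∀ᵐ s ∂unif01, s ∈ Ioo (0:ℝ) 1 := ae_restrict_mem measurableSet_Ioo
  apply lintegral_congr_ae
  filter_upwards [hs01] with s hs
  have hFm : Measurable fun v : Fin n → ℝ => F (Fin.cons s v) := by
    apply hF.comp
    apply measurable_pi_lambda
    intro i
    refine Fin.cases ?_ (fun i => ?_) i
    · simp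
    · simpa using measurable_pi_apply i
  rw [← lam_scale n s hs.1 hs.2 (fun v => F (Fin.cons s v)) hFm, ← lintegral_indicator]
  · congr 1
    funext v
    have : (Fin.cons s v : Fin (n+1) → ℝ) ∈ A 0 ↔ v ∈ {v | ∀ i, v i < s} := by
      simp only [A, mem_ofPred_eq]
      constructor
      · intro h i
        simpa using h i.succ (Fin.succ_ne_zero i)
      · intro h j
        refine Fin.cases ?_ (fun i => ?_) j
        · simp
        · intro _; simpa using h i
    by_cases hu : v ∈ {v | ∀ i, v i < s}
    · rw [indicator_of_mem hu, indicator_of_mem (this.2 hu)]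
    · rw [indicator_of_notMem hu, indicator_of_notMem (fun h => hu (this.1 h))]
  · rw [ofPred_forall]
    exact MeasurableSet.iInter fun i => measurableSet_lt (measurable_pi_apply i) measurable_const


lemma lint_scale (c : ℝ) (hc : 0 < c) (F : ℝ → ℝ≥0∞) (hF : Measurable F) :
    ∫⁻ v, F v = ENNReal.ofReal c * ∫⁻ v, F (c * v) := by
  have hmap := Real.smul_map_volume_mul_left hc.ne'
  conv_lhs => rw [← hmap]
  rw [lintegral_smul_measure, abs_of_pos hc, lintegral_map hF (measurable_const_mul c), smul_eq_mul]

lemma pareto_eq : pareto1 = unif01.map (fun u => u⁻¹) := by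
  ext E hE
  unfold pareto1 paretoMeasure unif01
  rw [withDensity_apply _ hE, Measure.map_apply measurable_inv hE, ← lintegral_indicator hE]
  have h1 : ∀ x, E.indicator (fun x => paretoPDF 1 1 x) x
      = (Ici (1:ℝ)).indicator (fun x => E.indicator (fun x => ENNReal.ofReal (x^(-2:ℝ))) x) x := by
    intro x
    by_cases hx : 1 ≤ x
    · rw [indicator_of_mem (s := Ici (1:ℝ)) hx]
      by_cases hE : x ∈ E
      · rw [indicator_of_mem hE, indicator_of_mem hE, paretoPDF_of_le hx]
        norm_num
      · rw [indicator_of_notMem hE, indicator_of_notMem hE]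
    · rw [indicator_of_notMem (s := Ici (1:ℝ)) hx]
      by_cases hE : x ∈ E
      · rw [indicator_of_mem hE, paretoPDF_of_lt (not_le.1 hx)]
      · rw [indicator_of_notMem hE]
  rw [lintegral_congr h1, lintegral_indicator measurableSet_Ici, setLIntegral_congr Ioi_ae_eq_Ici.symm]
  have himg : (fun u : ℝ => u⁻¹) '' (Ioo 0 1) = Ioi 1 := by
    ext x
    constructor
    · rintro ⟨u, hu, rfl⟩
      exact (one_lt_inv₀ hu.1).2 hu.2
    · intro hx
      have hx0 : (0:ℝ) < x := one_pos.trans hx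
      exact ⟨x⁻¹, ⟨inv_pos.2 hx0, inv_lt_one_of_one_lt₀ hx⟩, inv_inv x⟩
  rw [← himg, lintegral_image_eq_lintegral_abs_deriv_mul (f' := fun u => -(u^2)⁻¹) measurableSet_Ioo
    (fun u hu => (hasDerivAt_inv hu.1.ne').hasDerivWithinAt) (inv_injective.injOn)]
  rw [← lintegral_indicator_one (measurable_inv hE)]
  apply setLIntegral_congr_fun measurableSet_Ioo
  intro u hu
  simp only
  have hmem : u ∈ (fun u => u⁻¹) ⁻¹' E ↔ u⁻¹ ∈ E := Iff.rfl
  by_cases h : u⁻¹ ∈ E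
  · rw [indicator_of_mem h, indicator_of_mem (hmem.2 h), ← ENNReal.ofReal_mul (abs_nonneg _)]
    simp only [Pi.one_apply]
    rw [← ENNReal.ofReal_one]
    congr 1
    rw [Real.inv_rpow hu.1.le, Real.rpow_neg hu.1.le, inv_inv, abs_neg, abs_of_nonneg (by positivity)]
    have := hu.1
    norm_num
    field_simp
  · rw [indicator_of_notMem h, indicator_of_notMem (fun h2 => h (hmem.1 h2)), mul_zero]

lemma gp_eq (γ : ℝ) : gpMeasure γ = unif01.map (fun u => hGamma γ u⁻¹) := by
  unfold gpMeasure
  rw [pareto_eq, Measure.map_map (measurable_hGamma γ) measurable_inv]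
  rfl

lemma gpPi_eq (γ : ℝ) (n : ℕ) : gpPi γ n = (lam n).map (fun u i => hGamma γ (u i)⁻¹) := by
  unfold gpPi lam
  rw [gp_eq]
  have hm : AEMeasurable (fun u => hGamma γ u⁻¹) unif01 :=
    ((measurable_hGamma γ).comp measurable_inv).aemeasurable
  have : SigmaFinite (unif01.map (fun u => hGamma γ u⁻¹)) := by
    have := Measure.isProbabilityMeasure_map hm
    infer_instance
  rw [Measure.pi_map_pi (fun _ => hm)]

lemma unif_mem : ∀ᵐ s ∂unif01, s ∈ Ioo (0:ℝ) 1 := ae_restrict_mem measurableSet_Ioo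

lemma lint_pow (n : ℕ) : (n+1 : ℝ≥0∞) * ∫⁻ s, ENNReal.ofReal (s^n) ∂unif01 = 1 := by
  unfold unif01
  rw [← ofReal_integral_eq_lintegral_ofReal]
  · rw [← integral_Ioc_eq_integral_Ioo, ← intervalIntegral.integral_of_le zero_le_one, integral_pow]
    have : (n+1 : ℝ≥0∞) = ENNReal.ofReal (n+1) := by
      rw [ENNReal.ofReal_add (by positivity) one_pos.le]; simp
    rw [this, ← ENNReal.ofReal_mul (by positivity)]
    simp
    field_simp
  · exact ((continuous_pow n).integrableOn_Icc (a := 0) (b := 1)).mono_set Ioo_subset_Icc_self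
  · filter_upwards [ae_restrict_mem measurableSet_Ioo] with s hs
    exact pow_nonneg hs.1.le _

lemma cons_scale {n : ℕ} (s : ℝ) (v : Fin n → ℝ) :
    (Fin.cons s (fun i => s * v i) : Fin (n+1) → ℝ)
      = fun i => s * (Fin.cons 1 v : Fin (n+1) → ℝ) i := by
  funext i
  refine Fin.cases ?_ (fun i => ?_) i <;> simp

lemma cons_scale2 {n : ℕ} (x s : ℝ) (hs : 0 < s) (v : Fin n → ℝ) :
    (Fin.cons x (Fin.cons s (fun i => s * v i) : Fin (n+1) → ℝ) : Fin (n+2) → ℝ)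
      = fun i => s * (Fin.cons (x/s) (Fin.cons 1 v : Fin (n+1) → ℝ) : Fin (n+2) → ℝ) i := by
  rw [cons_scale]
  funext i
  refine Fin.cases ?_ (fun i => ?_) i
  · simp; field_simp
  · simp

lemma cons_pos {n : ℕ} (x : ℝ) (hx : 0 < x) (v : Fin n → ℝ) (hv : ∀ i, 0 < v i) (i : Fin (n+1)) :
    0 < (Fin.cons x v : Fin (n+1) → ℝ) i := by
  refine Fin.cases ?_ (fun i => ?_) i
  · simpa
  · simpa using hv i

lemma measurable_cons {n : ℕ} {α : Type*} [MeasurableSpace α] (f : α → ℝ) (g : α → Fin n → ℝ)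
    (hf : Measurable f) (hg : Measurable g) :
    Measurable (fun a => (Fin.cons (f a) (g a) : Fin (n+1) → ℝ)) := by
  apply measurable_pi_lambda
  intro i
  refine Fin.cases ?_ (fun i => ?_) i
  · simpa using hf
  · simp only [Fin.cons_succ]
    exact (measurable_pi_apply i).comp hg

lemma kk_law (γ : ℝ) {r : ℕ} (K : (Fin (r+1) → ℝ) → ℝ) (hK : Measurable K)
    (hLS : LocScaleInvariant K) (N : ℝ → ℝ≥0∞) (hN : Measurable N) (n : ℕ) (hn : r + 1 ≤ n) :
    ∫⁻ w, N (kk γ K n w) ∂(lam n) = ∫⁻ v, N (kk γ K (r+1) (Fin.cons 1 v)) ∂(lam r) := by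
  have key : ∀ n, r + 1 ≤ n + 1 → ∫⁻ w, N (kk γ K (n+1) w) ∂(lam (n+1)) =
      ∫⁻ v, N (kk γ K (n+1) (Fin.cons 1 v)) ∂(lam n) := by
    intro n hn
    rw [polar n (fun w => N (kk γ K (n+1) w)) (hN.comp (measurable_kk γ K hK (n+1)))
      (fun u σ => by rw [kk_perm γ K _ hn])]
    have : ∀ᵐ s ∂unif01, ENNReal.ofReal (s^n) *
      ∫⁻ v, N (kk γ K (n+1) (Fin.cons s (fun i => s * v i))) ∂(lam n) = 
      ENNReal.ofReal (s^n) * ∫⁻ v, N (kk γ K (n+1) (Fin.cons 1 v)) ∂(lam n) := by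
      filter_upwards [unif_mem] with s hs
      congr 1
      apply lintegral_congr_ae
      filter_upwards [lam_mem n] with v hv
      rw [cons_scale, kk_scale γ K hLS _ hn s hs.1]
      exact cons_pos 1 one_pos _ (fun i => (hv i).1)
    rw [lintegral_congr_ae this, lintegral_mul_const _ (by fun_prop), ← mul_assoc, lint_pow, one_mul]
  induction n, hn using Nat.le_induction with
  | base => exact key r le_rfl
  | succ n hn ih =>
    rw [key n (by omega), ← ih]
    apply lintegral_congr_ae
    filter_upwards [lam_mem n] with v hv
    rw [kk_drop_one' γ K n hn v hv]

/-- density of the `(r+1)`-st smallest of `n` uniforms -/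
def betaD (r n : ℕ) (t : ℝ) : ℝ :=
  ((n.descFactorial (r+1) : ℝ) / r.factorial) * t^r * (1-t)^(n-(r+1))

lemma measurable_betaD (r n : ℕ) : Measurable (betaD r n) := by
  unfold betaD; fun_prop

lemma betaD_conv_aux (r n : ℕ) (hn : r + 1 ≤ n) (ρ : ℝ) (h0 : 0 < ρ) (h1 : ρ < 1) :
    ∫⁻ s in Ioo ρ 1, ENNReal.ofReal ((n+1) * s^(n-1) * betaD r n (ρ/s)) 
      = ENNReal.ofReal (betaD r (n+1) ρ) := by
  obtain ⟨k, rfl⟩ := Nat.exists_eq_add_of_le hn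
  set c : ℝ := (((r+1+k).descFactorial (r+1) : ℝ) / r.factorial) with hc
  have e : ∀ s ∈ Ioo ρ 1, ((r+1+k : ℕ)+1) * s^(r+1+k-1) * betaD r (r+1+k) (ρ/s)
      = ((r+1+k : ℕ)+1) * c * ρ^r * (s-ρ)^k := by
    intro s hs
    have hs0 : 0 < s := h0.trans hs.1
    unfold betaD
    rw [← hc]
    have : 1 - ρ/s = (s-ρ)/s := by field_simp
    rw [this, div_pow, div_pow]
    have h3 : r+1+k-1 = r+k := by omega
    have h4 : r+1+k-(r+1) = k := by omega
    rw [h3, h4, pow_add]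
    field_simp
  rw [setLIntegral_congr_fun measurableSet_Ioo (g := fun s => ENNReal.ofReal (((r+1+k : ℕ)+1) * c * ρ^r * (s-ρ)^k)) (fun s hs => by rw [e s hs]),
    ← ofReal_integral_eq_lintegral_ofReal]
  · congr 1
    rw [← integral_Ioc_eq_integral_Ioo, ← intervalIntegral.integral_of_le h1.le]
    rw [intervalIntegral.integral_const_mul, intervalIntegral.integral_comp_sub_right (fun s => s^k),
      integral_pow]
    unfold betaD
    have h4 : r+1+k+1-(r+1) = k+1 := by omega
    have h5 := Nat.succ_descFactorial (r+1+k) (r+1)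
    rw [h4]
    have h6 : r+1+k+1-(r+1) = k+1 := by omega
    rw [h6] at h5
    have h7 : ((k:ℝ)+1) * ((r+1+k+1).descFactorial (r+1) : ℝ) = ((r+1+k:ℕ)+1) * ((r+1+k).descFactorial (r+1) : ℝ) := by
      exact_mod_cast h5
    rw [hc]
    have hf : (r.factorial : ℝ) ≠ 0 := by positivity
    have hk : (k:ℝ) + 1 ≠ 0 := by positivity
    have h8 : ((r+1+k+1).descFactorial (r+1) : ℝ) = ((r+1+k:ℕ)+1) * ((r+1+k).descFactorial (r+1) : ℝ) / (k+1) := by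
      rw [← h7]; field_simp
    rw [h8]
    simp only [sub_self, ne_eq, Nat.succ_ne_zero, not_false_eq_true, zero_pow, sub_zero]
    field_simp
  · have : Continuous fun s => ((r+1+k : ℕ)+1) * c * ρ^r * (s-ρ)^k := by fun_prop
    exact (this.integrableOn_Icc (a := ρ) (b := 1)).mono_set Ioo_subset_Icc_self
  · filter_upwards [ae_restrict_mem measurableSet_Ioo] with s hs
    have : 0 ≤ s - ρ := by linarith [hs.1]
    simp only [Pi.zero_apply]
    positivity

lemma betaD_conv (r n : ℕ) (hn : r + 1 ≤ n) (x : ℝ) (Ψ : ℝ → ℝ≥0∞) (hΨ : Measurable Ψ) :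
    (n+1 : ℝ≥0∞) * ∫⁻ s, ENNReal.ofReal (s^n) *
      ∫⁻ t, ENNReal.ofReal (betaD r n t) * Ψ (x / s / t) ∂unif01 ∂unif01
    = ∫⁻ t, ENNReal.ofReal (betaD r (n+1) t) * Ψ (x / t) ∂unif01 := by
  have hbm := measurable_betaD r n
  let S : Set (ℝ × ℝ) := {p | 0 < p.2 ∧ p.2 < p.1 ∧ p.1 < 1}
  have hS : MeasurableSet S :=
    (measurableSet_lt measurable_const measurable_snd).inter
      ((measurableSet_lt measurable_snd measurable_fst).inter
        (measurableSet_lt measurable_fst measurable_const))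
  let H : ℝ × ℝ → ℝ≥0∞ := S.indicator (fun p =>
    ENNReal.ofReal ((n+1) * p.1^(n-1) * betaD r n (p.2/p.1)) * Ψ (x / p.2))
  have hH : Measurable H := by
    apply Measurable.indicator _ hS
    apply Measurable.mul
    · apply ENNReal.measurable_ofReal.comp
      apply Measurable.mul
      · fun_prop
      · exact hbm.comp (measurable_snd.div measurable_fst)
    · exact hΨ.comp (measurable_snd.const_div x)
  have hL : (n+1 : ℝ≥0∞) * ∫⁻ s, ENNReal.ofReal (s^n) *
      ∫⁻ t, ENNReal.ofReal (betaD r n t) * Ψ (x / s / t) ∂unif01 ∂unif01 = ∫⁻ s, ∫⁻ ρ, H (s, ρ) := by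
    have hn1 : (n+1 : ℝ≥0∞) = ENNReal.ofReal (n+1) := by
      rw [ENNReal.ofReal_add (by positivity) one_pos.le]; simp
    rw [← lintegral_const_mul' _ _ (by rw [hn1]; exact ENNReal.ofReal_ne_top)]
    unfold unif01
    rw [← lintegral_indicator measurableSet_Ioo]
    congr 1
    funext s
    by_cases hs : s ∈ Ioo (0:ℝ) 1
    · rw [indicator_of_mem hs]
      have hHs : Measurable (fun ρ => H (s, ρ)) := hH.comp measurable_prodMk_left
      rw [lint_scale s hs.1 _ hHs, ← lintegral_indicator measurableSet_Ioo, ← mul_assoc, hn1,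
        ← ENNReal.ofReal_mul (by positivity), ← lintegral_const_mul' _ _ ENNReal.ofReal_ne_top, 
        ← lintegral_const_mul' _ _ ENNReal.ofReal_ne_top]
      congr 1
      funext t
      by_cases ht : t ∈ Ioo (0:ℝ) 1
      · have hm : (s, s*t) ∈ S := ⟨mul_pos hs.1 ht.1, by nlinarith [hs.1, ht.2], hs.2⟩
        simp only [H]
        rw [indicator_of_mem ht, indicator_of_mem hm]
        simp only
        have : s * t / s = t := by have := hs.1; field_simp
        have h01 : 0 ≤ s := hs.1.le
        rw [this, div_div, ← mul_assoc, ← mul_assoc, ← ENNReal.ofReal_mul (by positivity),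
          ← ENNReal.ofReal_mul hs.1.le]
        congr 2
        obtain ⟨k, rfl⟩ : ∃ k, n = k + 1 := ⟨n - 1, by omega⟩
        simp; ring
      · have hm : (s, s*t) ∉ S := by
          rintro ⟨h1, h2, h3⟩
          simp only at h1 h2
          exact ht ⟨pos_of_mul_pos_right h1 hs.1.le, by nlinarith [hs.1]⟩
        simp only [H]
        rw [indicator_of_notMem ht, indicator_of_notMem hm, mul_zero, mul_zero]
    · rw [indicator_of_notMem hs]
      symm
      apply lintegral_eq_zero_of_ae_eq_zero
      filter_upwards with ρ
      apply indicator_of_notMem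
      rintro ⟨h1, h2, h3⟩
      exact hs ⟨h1.trans h2, h3⟩
  rw [hL, lintegral_lintegral_swap (f := fun s ρ => H (s, ρ)) hH.aemeasurable]
  unfold unif01
  rw [← lintegral_indicator measurableSet_Ioo]
  congr 1
  funext ρ
  by_cases hρ : ρ ∈ Ioo (0:ℝ) 1
  · rw [indicator_of_mem hρ, ← betaD_conv_aux r n hn ρ hρ.1 hρ.2, ← lintegral_mul_const _ (by
      apply ENNReal.measurable_ofReal.comp
      apply Measurable.mul
      · fun_prop
      · exact hbm.comp (measurable_const.div measurable_id)),
      ← lintegral_indicator measurableSet_Ioo]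
    congr 1
    funext s
    by_cases hs : s ∈ Ioo ρ 1
    · have hm : (s, ρ) ∈ S := ⟨hρ.1, hs.1, hs.2⟩
      simp only [H]
      rw [indicator_of_mem hs, indicator_of_mem hm]
    · have hm : (s, ρ) ∉ S := by
        rintro ⟨h1, h2, h3⟩
        exact hs ⟨h2, h3⟩
      simp only [H]
      rw [indicator_of_notMem hs, indicator_of_notMem hm]
  · rw [indicator_of_notMem hρ]
    apply lintegral_eq_zero_of_ae_eq_zero
    filter_upwards with s
    apply indicator_of_notMem
    rintro ⟨h1, h2, h3⟩
    exact hρ ⟨h1, h2.trans h3⟩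

lemma kk_law_cons (γ : ℝ) {r : ℕ} (K : (Fin (r+1) → ℝ) → ℝ) (hK : Measurable K)
    (hLS : LocScaleInvariant K) (N : ℝ → ℝ≥0∞) (hN : Measurable N) (n : ℕ) (hn : r + 1 ≤ n)
    (x : ℝ) (hx : 0 < x) :
    ∫⁻ w, N (kk γ K (n+1) (Fin.cons x w)) ∂(lam n)
      = ∫⁻ t, ENNReal.ofReal (betaD r n t) *
          ∫⁻ v, N (kk γ K (r+2) (Fin.cons (x/t) (Fin.cons 1 v))) ∂(lam r) ∂unif01 := by
  have key : ∀ n, r + 1 ≤ n + 1 → ∀ x, 0 < x → ∫⁻ w, N (kk γ K (n+2) (Fin.cons x w)) ∂(lam (n+1)) =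
      (n+1 : ℝ≥0∞) * ∫⁻ s, ENNReal.ofReal (s^n) *
        ∫⁻ v, N (kk γ K (n+2) (Fin.cons (x/s) (Fin.cons 1 v))) ∂(lam n) ∂unif01 := by
    intro n hn x hx
    rw [polar n (fun w => N (kk γ K (n+2) (Fin.cons x w)))
      (hN.comp ((measurable_kk γ K hK (n+2)).comp (measurable_cons _ _ measurable_const measurable_id)))
      (fun u σ => by rw [kk_cons_perm γ K _ (by omega)])]
    congr 1
    apply lintegral_congr_ae
    filter_upwards [unif_mem] with s hs
    congr 1
    apply lintegral_congr_ae
    filter_upwards [lam_mem n] with v hv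
    rw [cons_scale2 x s hs.1, kk_scale γ K hLS _ (by omega) s hs.1]
    exact cons_pos _ (div_pos hx hs.1) _ (cons_pos 1 one_pos _ (fun i => (hv i).1))
  have hΨ : Measurable (fun y => ∫⁻ v, N (kk γ K (r+2) (Fin.cons y (Fin.cons 1 v))) ∂(lam r)) := by
    apply Measurable.lintegral_prod_right (f := fun (y : ℝ) (v : Fin r → ℝ) => N (kk γ K (r+2) (Fin.cons y (Fin.cons 1 v))))
    exact hN.comp ((measurable_kk γ K hK (r+2)).comp
      (measurable_cons _ _ measurable_fst (measurable_cons _ _ measurable_const measurable_snd)))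
  induction n, hn using Nat.le_induction generalizing x with
  | base =>
    rw [key r le_rfl x hx]
    have hn1 : (r+1 : ℝ≥0∞) = ENNReal.ofReal (r+1) := by
      rw [ENNReal.ofReal_add (by positivity) one_pos.le]; simp
    rw [hn1, ← lintegral_const_mul' _ _ ENNReal.ofReal_ne_top]
    congr 1
    funext s
    rw [← mul_assoc, ← ENNReal.ofReal_mul (by positivity)]
    congr 2
    unfold betaD
    rw [Nat.descFactorial_self, Nat.factorial_succ]
    have hf : (r.factorial : ℝ) ≠ 0 := by positivity
    push_cast
    rw [Nat.sub_self, pow_zero]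
    field_simp
  | succ n hn ih =>
    rw [key n (by omega) x hx, ← betaD_conv r n hn x _ hΨ]
    congr 1
    apply lintegral_congr_ae
    filter_upwards [unif_mem] with s hs
    congr 1
    rw [← ih (x/s) (div_pos hx hs.1)]
    apply lintegral_congr_ae
    filter_upwards [lam_mem n] with v hv
    rw [kk_drop_one γ K n hn _ v hv]


lemma pi_succ (μ : Measure ℝ) [SigmaFinite μ] (n : ℕ) (F : (Fin (n+1) → ℝ) → ℝ≥0∞) (hF : Measurable F) :
    ∫⁻ u, F u ∂(Measure.pi fun _ : Fin (n+1) => μ)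
      = ∫⁻ s, ∫⁻ v, F (Fin.cons s v) ∂(Measure.pi fun _ : Fin n => μ) ∂μ := by
  have h := (measurePreserving_piFinSuccAbove (fun _ : Fin (n+1) => μ) 0).symm
  have h2 := h.lintegral_comp_emb (MeasurableEquiv.measurableEmbedding _) F
  rw [← h2, lintegral_prod]
  · simp [MeasurableEquiv.piFinSuccAbove]
    rfl
  · exact (hF.comp (MeasurableEquiv.measurable _)).aemeasurable

lemma lint_exp (F : ℝ → ℝ≥0∞) (hF : Measurable F) :
    ∫⁻ t, F t ∂expMeasure1 = ∫⁻ t in Ioi 0, ENNReal.ofReal (rexp (-t)) * F t := by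
  unfold expMeasure1
  rw [lintegral_map (g := fun u => -Real.log u) hF (Real.measurable_log.neg)]
  unfold unif01
  have himg : (fun t : ℝ => rexp (-t)) '' (Ioi 0) = Ioo 0 1 := by
    ext u
    constructor
    · rintro ⟨t, ht, rfl⟩
      exact ⟨Real.exp_pos _, by rw [Real.exp_lt_one_iff]; simpa using ht⟩
    · intro hu
      refine ⟨-Real.log u, ?_, by simp [Real.exp_log hu.1]⟩
      have := Real.log_neg hu.1 hu.2
      simpa using this
  rw [← himg, lintegral_image_eq_lintegral_abs_deriv_mul (f' := fun t => -rexp (-t)) measurableSet_Ioi]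
  · apply setLIntegral_congr_fun measurableSet_Ioi
    intro t ht
    simp [abs_of_pos (Real.exp_pos _)]
  · intro t ht
    have h3 : HasDerivAt (fun t : ℝ => -t) (-1) t := (hasDerivAt_id t).neg
    have := h3.exp
    have h4 : -rexp (-t) = rexp (-t) * (-1) := by ring
    simp only [h4]
    exact this.hasDerivWithinAt
  · intro a _ b _ h
    simpa using h

/-- Erlang density -/
def erlD (r : ℕ) (t : ℝ) : ℝ := t^r * rexp (-t) / r.factorial

lemma measurable_erlD (r : ℕ) : Measurable (erlD r) := by unfold erlD; fun_prop

lemma erlD_aux (r : ℕ) (ρ : ℝ) (h0 : 0 < ρ) :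
    ∫⁻ s in Ioo 0 ρ, ENNReal.ofReal (rexp (-s) * erlD r (ρ - s)) = ENNReal.ofReal (erlD (r+1) ρ) := by
  have e : ∀ s, rexp (-s) * erlD r (ρ - s) = rexp (-ρ) / r.factorial * (ρ-s)^r := by
    intro s
    unfold erlD
    have : rexp (-ρ) = rexp (-s) * rexp (-(ρ-s)) := by rw [← Real.exp_add]; congr 1; ring
    rw [this]; ring
  simp_rw [e]
  rw [← ofReal_integral_eq_lintegral_ofReal]
  · congr 1
    rw [← integral_Ioc_eq_integral_Ioo, ← intervalIntegral.integral_of_le h0.le]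
    rw [intervalIntegral.integral_const_mul, intervalIntegral.integral_comp_sub_left (fun s => s^r),
      integral_pow]
    unfold erlD
    rw [Nat.factorial_succ]
    have hf : (r.factorial : ℝ) ≠ 0 := by positivity
    push_cast
    simp only [sub_self, ne_eq, Nat.succ_ne_zero, not_false_eq_true, zero_pow, sub_zero]
    field_simp
  · have : Continuous fun s => rexp (-ρ) / r.factorial * (ρ-s)^r := by fun_prop
    exact (this.integrableOn_Icc (a := 0) (b := ρ)).mono_set Ioo_subset_Icc_self
  · filter_upwards [ae_restrict_mem measurableSet_Ioo] with s hs
    have : 0 ≤ ρ - s := by linarith [hs.2]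
    simp only [Pi.zero_apply]
    positivity

lemma lint_erlang (r : ℕ) (F : ℝ → ℝ≥0∞) (hF : Measurable F) :
    ∫⁻ t, F t ∂(erlangMeasure (r+1)) = ∫⁻ t in Ioi 0, ENNReal.ofReal (erlD r t) * F t := by
  unfold erlangMeasure
  have hsum : ∀ n, Measurable (fun e : Fin n → ℝ => ∑ i, e i) := fun n =>
    Finset.measurable_sum _ fun i _ => measurable_pi_apply i
  rw [lintegral_map hF (hsum _)]
  induction r generalizing F with
  | zero =>
    rw [pi_succ _ _ (fun u => F (∑ i, u i)) (hF.comp (hsum _))]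
    simp only [Fin.sum_univ_succ, Fin.cons_zero, Fin.cons_succ, Finset.univ_eq_empty,
      Finset.sum_empty, add_zero, lintegral_const, measure_univ, mul_one]
    rw [lint_exp F hF]
    simp [erlD]
  | succ r ih =>
    rw [pi_succ _ _ (fun u => F (∑ i, u i)) (hF.comp (hsum _))]
    have h1 : ∀ s, ∫⁻ v : Fin (r+1) → ℝ, F (∑ i, (Fin.cons s v : Fin (r+2) → ℝ) i) ∂(Measure.pi fun _ => expMeasure1)
        = ∫⁻ t in Ioi 0, ENNReal.ofReal (erlD r t) * F (s + t) := by
      intro s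
      rw [← ih (fun t => F (s + t)) (hF.comp (measurable_const_add s))]
      congr 1
      funext v
      rw [Fin.sum_univ_succ]
      simp
    simp_rw [h1]
    have hbm := measurable_erlD r
    let S : Set (ℝ × ℝ) := {p | 0 < p.1 ∧ p.1 < p.2}
    have hS : MeasurableSet S :=
      (measurableSet_lt measurable_const measurable_fst).inter
        (measurableSet_lt measurable_fst measurable_snd)
    let H : ℝ × ℝ → ℝ≥0∞ := S.indicator (fun p =>
      ENNReal.ofReal (rexp (-p.1) * erlD r (p.2 - p.1)) * F p.2)
    have hH : Measurable H := by
      apply Measurable.indicator _ hS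
      apply Measurable.mul
      · apply ENNReal.measurable_ofReal.comp
        apply Measurable.mul
        · fun_prop
        · exact hbm.comp (measurable_snd.sub measurable_fst)
      · exact hF.comp measurable_snd
    have hin : Measurable (fun s => ∫⁻ t in Ioi 0, ENNReal.ofReal (erlD r t) * F (s + t)) := by
      apply Measurable.lintegral_prod_right (f := fun (s : ℝ) (t : ℝ) => ENNReal.ofReal (erlD r t) * F (s + t))
      exact ((ENNReal.measurable_ofReal.comp (hbm.comp measurable_snd))).mul
        (hF.comp (measurable_fst.add measurable_snd))
    rw [lint_exp _ hin]
    have hL : ∫⁻ s in Ioi 0, ENNReal.ofReal (rexp (-s)) * (∫⁻ t in Ioi 0, ENNReal.ofReal (erlD r t) * F (s + t))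
        = ∫⁻ s, ∫⁻ ρ, H (s, ρ) := by
      rw [← lintegral_indicator measurableSet_Ioi]
      congr 1
      funext s
      by_cases hs : s ∈ Ioi (0:ℝ)
      · rw [indicator_of_mem hs, ← lintegral_const_mul' _ _ ENNReal.ofReal_ne_top,
          ← lintegral_add_right_eq_self (fun ρ => H (s, ρ)) s, ← lintegral_indicator measurableSet_Ioi]
        congr 1
        funext t
        by_cases ht : t ∈ Ioi (0:ℝ)
        · have hm : (s, t + s) ∈ S := ⟨hs, by simpa using ht⟩
          simp only [H]
          rw [indicator_of_mem ht, indicator_of_mem hm]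
          simp only
          rw [← mul_assoc, ← ENNReal.ofReal_mul (Real.exp_pos _).le, add_sub_cancel_right, add_comm s t]
        · have hm : (s, t + s) ∉ S := by
            rintro ⟨h1, h2⟩
            exact ht (by simpa using h2)
          simp only [H]
          rw [indicator_of_notMem ht, indicator_of_notMem hm]
      · rw [indicator_of_notMem hs]
        symm
        apply lintegral_eq_zero_of_ae_eq_zero
        filter_upwards with ρ
        apply indicator_of_notMem
        rintro ⟨h1, h2⟩
        exact hs h1
    rw [hL, lintegral_lintegral_swap (f := fun s ρ => H (s, ρ)) hH.aemeasurable,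
      ← lintegral_indicator measurableSet_Ioi]
    congr 1
    funext ρ
    by_cases hρ : ρ ∈ Ioi (0:ℝ)
    · rw [indicator_of_mem hρ, ← erlD_aux r ρ hρ, ← lintegral_mul_const _ (by
        apply ENNReal.measurable_ofReal.comp
        apply Measurable.mul
        · fun_prop
        · exact hbm.comp (measurable_const.sub measurable_id)),
        ← lintegral_indicator measurableSet_Ioo]
      congr 1
    · rw [indicator_of_notMem hρ]
      apply lintegral_eq_zero_of_ae_eq_zero
      filter_upwards with s
      apply indicator_of_notMem
      rintro ⟨h1, h2⟩
      exact hρ (lt_trans h1 h2)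

lemma erlang_eq (r : ℕ) : erlangMeasure (r+1) =
    (volume.restrict (Ioi 0)).withDensity (fun t => ENNReal.ofReal (erlD r t)) := by
  ext E hE
  rw [← lintegral_indicator_one hE, lint_erlang r _ (measurable_one.indicator hE),
    withDensity_apply _ hE, ← lintegral_indicator hE]
  congr 1
  funext t
  by_cases ht : t ∈ E
  · simp [ht]
  · simp [ht]


lemma lint_cs {α : Type*} [MeasurableSpace α] (η : Measure α) (f : α → ℝ≥0∞) (hf : AEMeasurable f η) :
    (∫⁻ a, f a ∂η)^2 ≤ η univ * ∫⁻ a, (f a)^2 ∂η := by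
  have h := ENNReal.lintegral_mul_le_Lp_mul_Lq η (p := 2) (q := 2) 
    (by constructor <;> norm_num) hf (g := fun _ => 1) aemeasurable_const
  simp only [Pi.mul_apply, mul_one, ENNReal.one_rpow, lintegral_const, one_mul] at h
  calc (∫⁻ a, f a ∂η)^2 ≤ ((∫⁻ a, (f a)^(2:ℝ) ∂η)^(1/2:ℝ) * (η univ)^(1/2:ℝ))^2 := by gcongr
    _ = η univ * ∫⁻ a, (f a)^2 ∂η := by
      rw [mul_pow, ← ENNReal.rpow_natCast, ← ENNReal.rpow_natCast, ← ENNReal.rpow_mul, ← ENNReal.rpow_mul]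
      norm_num
      rw [mul_comm]

/-- majorant of densities -/
def Bd (r : ℕ) (t : ℝ) : ℝ := t^r * rexp (-t/2) / r.factorial

lemma measurable_Bd (r : ℕ) : Measurable (Bd r) := by unfold Bd; fun_prop

lemma Bd_nonneg (r : ℕ) (t : ℝ) (ht : 0 < t) : 0 ≤ Bd r t := by unfold Bd; positivity

lemma Bd_lint (r : ℕ) : ∫⁻ t in Ioi 0, ENNReal.ofReal (Bd r t) < ⊤ := by
  have h := Real.GammaIntegral_convergent (s := (r:ℝ)+1) (by positivity)
  have h2 := (integrableOn_Ioi_comp_mul_left_iff (fun x => rexp (-x) * x^((r:ℝ)+1-1)) 0 (a := 1/2) (by norm_num)).2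
    (by simpa using h)
  have h3 : IntegrableOn (Bd r) (Ioi 0) := by
    refine IntegrableOn.congr_fun (h2.const_mul (2^r / r.factorial)) ?_ measurableSet_Ioi
    intro t ht
    have ht' : (0:ℝ) < t := ht
    simp only [add_sub_cancel_right, Real.rpow_natCast]
    unfold Bd
    rw [mul_pow, show -(1/2*t) = -t/2 by ring]
    simp only [one_div, inv_pow]
    field_simp
  exact h3.lintegral_lt_top

lemma Bd_lint_mul (r : ℕ) : ∫⁻ t in Ioi 0, ENNReal.ofReal (Bd r t) * ENNReal.ofReal t < ⊤ := by
  have h := Bd_lint (r+1)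
  have e : ∫⁻ t in Ioi 0, ENNReal.ofReal (Bd r t) * ENNReal.ofReal t
      = ENNReal.ofReal (r+1) * ∫⁻ t in Ioi 0, ENNReal.ofReal (Bd (r+1) t) := by
    rw [← lintegral_const_mul' _ _ ENNReal.ofReal_ne_top]
    apply setLIntegral_congr_fun measurableSet_Ioi
    intro t ht
    simp only
    rw [← ENNReal.ofReal_mul (Bd_nonneg r t ht), ← ENNReal.ofReal_mul (by positivity)]
    congr 1
    unfold Bd
    rw [Nat.factorial_succ]
    push_cast
    have hf : (r.factorial : ℝ) ≠ 0 := by positivity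
    field_simp
    ring
  rw [e]
  exact ENNReal.mul_lt_top ENNReal.ofReal_lt_top h

section analytic

variable {V : Type*} [MeasurableSpace V] (μ : Measure V) [IsProbabilityMeasure μ] (r : ℕ)
  (Jp : ℝ → V → ℝ) 

lemma D_sq (hJ : Measurable (Function.uncurry Jp))
    (hJ2 : ∫⁻ y in Ioi (0:ℝ), ∫⁻ v, ENNReal.ofReal (Jp y v ^2) ∂μ < ⊤) :
    ∫⁻ x in Ioi (0:ℝ), (∫⁻ p, ENNReal.ofReal (|Jp (x/p.1) p.2| * Bd r p.1) 
      ∂((volume.restrict (Ioi (0:ℝ))).prod μ))^2 < ⊤ := by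
  set ν := (volume.restrict (Ioi (0:ℝ))).prod μ with hν
  have hpos : ∀ᵐ p ∂ν, 0 < p.1 := by
    rw [hν]
    exact Measure.quasiMeasurePreserving_fst.ae (ae_restrict_mem (measurableSet_Ioi))
  have hB : Measurable (fun p : ℝ × V => ENNReal.ofReal (Bd r p.1)) :=
    ENNReal.measurable_ofReal.comp ((measurable_Bd r).comp measurable_fst)
  have hJx : ∀ x, Measurable (fun p : ℝ × V => Jp (x/p.1) p.2) := fun x =>
    hJ.comp ((measurable_fst.const_div x).prodMk measurable_snd)
  have hJxx : Measurable (fun z : ℝ × (ℝ × V) => Jp (z.1/z.2.1) z.2.2) := 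
    hJ.comp ((measurable_fst.div measurable_snd.fst).prodMk measurable_snd.snd)
  let C : ℝ≥0∞ := ∫⁻ p, ENNReal.ofReal (Bd r p.1) ∂ν
  have hC : C < ⊤ := by
    simp only [C, hν]
    rw [lintegral_prod _ hB.aemeasurable]
    simpa using Bd_lint r
  have h1 : ∀ x, (∫⁻ p, ENNReal.ofReal (|Jp (x/p.1) p.2| * Bd r p.1) ∂ν)^2
      ≤ C * ∫⁻ p, ENNReal.ofReal (Bd r p.1) * ENNReal.ofReal (Jp (x/p.1) p.2 ^ 2) ∂ν := by
    intro x
    have := lint_cs (ν.withDensity (fun p => ENNReal.ofReal (Bd r p.1)))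
      (fun p => ENNReal.ofReal |Jp (x/p.1) p.2|) 
      (ENNReal.measurable_ofReal.comp (hJx x).abs).aemeasurable
    have ha : Measurable (fun p : ℝ × V => ENNReal.ofReal |Jp (x/p.1) p.2|) :=
      ENNReal.measurable_ofReal.comp (hJx x).abs
    rw [withDensity_apply _ MeasurableSet.univ, lintegral_withDensity_eq_lintegral_mul _ hB ha, lintegral_withDensity_eq_lintegral_mul _ hB
      (ha.pow_const 2), setLIntegral_univ] at this
    refine le_trans (le_of_eq ?_) (this.trans (le_of_eq ?_))
    · congr 1
      apply lintegral_congr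
      intro p
      simp only [Pi.mul_apply]
      rw [ENNReal.ofReal_mul (abs_nonneg _), mul_comm]
    · congr 1
      apply lintegral_congr
      intro p
      simp only [Pi.mul_apply]
      rw [← ENNReal.ofReal_pow (abs_nonneg _), sq_abs]
  refine lt_of_le_of_lt (lintegral_mono h1) ?_
  rw [lintegral_const_mul' _ _ hC.ne]
  apply ENNReal.mul_lt_top hC
  rw [lintegral_lintegral_swap (by
    apply Measurable.aemeasurable
    exact (hB.comp measurable_snd).mul (ENNReal.measurable_ofReal.comp (hJxx.pow_const 2)))]
  have h2 : ∀ᵐ p ∂ν, ∫⁻ x in Ioi (0:ℝ), ENNReal.ofReal (Bd r p.1) * ENNReal.ofReal (Jp (x/p.1) p.2 ^ 2)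
      = (ENNReal.ofReal (Bd r p.1) * ENNReal.ofReal p.1) * ∫⁻ y in Ioi (0:ℝ), ENNReal.ofReal (Jp y p.2 ^ 2) := by
    filter_upwards [hpos] with p hp
    rw [lintegral_const_mul' _ _ ENNReal.ofReal_ne_top, mul_assoc]
    congr 1
    have hm1 : Measurable (fun y => ENNReal.ofReal (Jp y p.2 ^ 2)) := 
      ENNReal.measurable_ofReal.comp ((hJ.comp (measurable_prodMk_right (y := p.2))).pow_const 2)
    have hm2 : Measurable (fun x => ENNReal.ofReal (Jp (x/p.1) p.2 ^ 2)) := 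
      hm1.comp (measurable_id.div_const p.1)
    rw [← lintegral_indicator measurableSet_Ioi, ← lintegral_indicator measurableSet_Ioi,
      lint_scale p.1 hp _ (hm2.indicator measurableSet_Ioi)]
    congr 1
    apply lintegral_congr
    intro y
    by_cases hy : y ∈ Ioi (0:ℝ)
    · have : p.1 * y ∈ Ioi (0:ℝ) := mul_pos hp hy
      rw [indicator_of_mem hy, indicator_of_mem this, mul_div_cancel_left₀ _ hp.ne']
    · have : p.1 * y ∉ Ioi (0:ℝ) := fun h => hy (pos_of_mul_pos_right h hp.le)
      rw [indicator_of_notMem hy, indicator_of_notMem this]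
  rw [lintegral_congr_ae h2, hν]
  have hm3 : Measurable (fun v => ∫⁻ y in Ioi (0:ℝ), ENNReal.ofReal (Jp y v ^ 2)) := by
    apply Measurable.lintegral_prod_right (f := fun v y => ENNReal.ofReal (Jp y v ^ 2))
    exact ENNReal.measurable_ofReal.comp ((hJ.comp measurable_swap).pow_const 2)
  rw [lintegral_prod_mul (μ := volume.restrict (Ioi (0:ℝ))) (ν := μ)
    (f := fun t => ENNReal.ofReal (Bd r t) * ENNReal.ofReal t) 
    (g := fun v => ∫⁻ y in Ioi (0:ℝ), ENNReal.ofReal (Jp y v ^ 2)) ?_ hm3.aemeasurable]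
  · apply ENNReal.mul_lt_top (Bd_lint_mul r)
    rw [lintegral_lintegral_swap (by
      apply Measurable.aemeasurable
      exact ENNReal.measurable_ofReal.comp ((hJ.comp measurable_swap).pow_const 2))]
    exact hJ2
  · exact ((ENNReal.measurable_ofReal.comp (measurable_Bd r)).mul ENNReal.measurable_ofReal).aemeasurable

lemma J_integrable (hJ : Measurable (Function.uncurry Jp))
    (hJ2 : ∫⁻ y in Ioi (0:ℝ), ∫⁻ v, ENNReal.ofReal (Jp y v ^2) ∂μ < ⊤) :
    ∀ᵐ x ∂(volume.restrict (Ioi (0:ℝ))), Integrable (fun p : ℝ × V => |Jp (x/p.1) p.2| * Bd r p.1)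
      ((volume.restrict (Ioi (0:ℝ))).prod μ) := by
  have hJxx : Measurable (fun z : ℝ × (ℝ × V) => |Jp (z.1/z.2.1) z.2.2| * Bd r z.2.1) := 
    (hJ.comp ((measurable_fst.div measurable_snd.fst).prodMk measurable_snd.snd)).abs.mul
      ((measurable_Bd r).comp measurable_snd.fst)
  have h := D_sq μ r Jp hJ hJ2
  have hm : Measurable (fun x => (∫⁻ p, ENNReal.ofReal (|Jp (x/p.1) p.2| * Bd r p.1) 
      ∂((volume.restrict (Ioi (0:ℝ))).prod μ))^2) := by
    apply Measurable.pow_const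
    apply Measurable.lintegral_prod_right (f := fun (x : ℝ) (p : ℝ × V) => ENNReal.ofReal (|Jp (x/p.1) p.2| * Bd r p.1))
    exact ENNReal.measurable_ofReal.comp hJxx
  filter_upwards [ae_lt_top hm h.ne] with x hx
  have hpos : ∀ᵐ p ∂((volume.restrict (Ioi (0:ℝ))).prod μ), 0 < p.1 :=
    Measure.quasiMeasurePreserving_fst.ae (ae_restrict_mem (measurableSet_Ioi))
  refine ⟨(hJxx.comp measurable_prodMk_left).aestronglyMeasurable, ?_⟩
  rw [hasFiniteIntegral_iff_ofReal]
  · exact lt_top_iff_ne_top.2 (fun h => by rw [h] at hx; simp at hx)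
  · filter_upwards [hpos] with p hp
    exact mul_nonneg (abs_nonneg _) (Bd_nonneg r _ hp)

lemma analytic_limit (hJ : Measurable (Function.uncurry Jp))
    (hJ2 : ∫⁻ y in Ioi (0:ℝ), ∫⁻ v, ENNReal.ofReal (Jp y v ^2) ∂μ < ⊤)
    (b : ℕ → ℝ → ℝ) (hbm : ∀ m, Measurable (b m)) (b' : ℝ → ℝ)
    (hb : ∀ᶠ m in atTop, ∀ t, 0 < t → |b m t| ≤ Bd r t)
    (hlim : ∀ t, 0 < t → Tendsto (fun m => b m t) atTop (𝓝 (b' t))) :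
    Tendsto (fun m => ∫ x in Ioi (0:ℝ), (∫ p, b m p.1 * Jp (x/p.1) p.2 
      ∂((volume.restrict (Ioi (0:ℝ))).prod μ))^2) atTop (𝓝 (∫ x in Ioi (0:ℝ), 
        (∫ p, b' p.1 * Jp (x/p.1) p.2 ∂((volume.restrict (Ioi (0:ℝ))).prod μ))^2)) := by
  have hpos : ∀ᵐ p ∂((volume.restrict (Ioi (0:ℝ))).prod μ), 0 < p.1 :=
    Measure.quasiMeasurePreserving_fst.ae (ae_restrict_mem (measurableSet_Ioi))
  have hJxx : Measurable (fun z : ℝ × (ℝ × V) => Jp (z.1/z.2.1) z.2.2) := 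
    (hJ.comp ((measurable_fst.div measurable_snd.fst).prodMk measurable_snd.snd))
  have hBxx : Measurable (fun z : ℝ × (ℝ × V) => |Jp (z.1/z.2.1) z.2.2| * Bd r z.2.1) := 
    hJxx.abs.mul ((measurable_Bd r).comp measurable_snd.fst)
  have hbound : ∀ᶠ m in atTop, ∀ x, ∀ᵐ p ∂((volume.restrict (Ioi (0:ℝ))).prod μ),
      ‖b m p.1 * Jp (x/p.1) p.2‖ ≤ |Jp (x/p.1) p.2| * Bd r p.1 := by
    filter_upwards [hb] with m hm x
    filter_upwards [hpos] with p hp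
    rw [norm_mul, Real.norm_eq_abs, Real.norm_eq_abs, mul_comm]
    exact mul_le_mul_of_nonneg_left (hm p.1 hp) (abs_nonneg _)
  have hJi := J_integrable μ r Jp hJ hJ2
  apply tendsto_integral_filter_of_dominated_convergence
    (bound := fun x => (∫ p, |Jp (x/p.1) p.2| * Bd r p.1 ∂((volume.restrict (Ioi (0:ℝ))).prod μ))^2)
  · filter_upwards with m
    apply AEStronglyMeasurable.pow
    apply StronglyMeasurable.aestronglyMeasurable
    apply StronglyMeasurable.integral_prod_right (f := fun (x : ℝ) (p : ℝ × V) => b m p.1 * Jp (x/p.1) p.2)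
    exact (((hbm m).comp measurable_snd.fst).mul hJxx).stronglyMeasurable
  · filter_upwards [hbound] with m hm
    filter_upwards [hJi] with x hx
    rw [norm_pow]
    gcongr
    exact norm_integral_le_of_norm_le hx (hm x)
  · refine ⟨?_, ?_⟩
    · apply AEStronglyMeasurable.pow
      apply StronglyMeasurable.aestronglyMeasurable
      apply StronglyMeasurable.integral_prod_right (f := fun (x : ℝ) (p : ℝ × V) => |Jp (x/p.1) p.2| * Bd r p.1)
      exact hBxx.stronglyMeasurable
    · rw [hasFiniteIntegral_iff_ofReal (ae_of_all _ fun x => sq_nonneg _)]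
      refine lt_of_eq_of_lt ?_ (D_sq μ r Jp hJ hJ2)
      apply lintegral_congr_ae
      filter_upwards [hJi] with x hx
      have h0 : 0 ≤ᵐ[(volume.restrict (Ioi (0:ℝ))).prod μ] fun p => |Jp (x/p.1) p.2| * Bd r p.1 := by
        filter_upwards [hpos] with p hp
        exact mul_nonneg (abs_nonneg _) (Bd_nonneg r _ hp)
      rw [ENNReal.ofReal_pow (integral_nonneg_of_ae h0), ofReal_integral_eq_lintegral_ofReal hx h0]
  · filter_upwards [hJi] with x hx
    apply Tendsto.pow
    apply tendsto_integral_filter_of_dominated_convergence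
      (bound := fun p => |Jp (x/p.1) p.2| * Bd r p.1)
    · filter_upwards with m
      exact (((hbm m).comp measurable_fst).mul (hJxx.comp measurable_prodMk_left)).aestronglyMeasurable
    · filter_upwards [hbound] with m hm using hm x
    · exact hx
    · filter_upwards [hpos] with p hp
      exact (hlim p.1 hp).mul_const _

end analytic

/-- density of `m` times the `(r+1)`-st smallest of `m-1` uniforms -/
def bD (r m : ℕ) : ℝ → ℝ := (Iio (m:ℝ)).indicator (fun t => betaD r (m-1) (t/m) / m)

lemma measurable_bD (r m : ℕ) : Measurable (bD r m) := by
  unfold bD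
  apply Measurable.indicator _ measurableSet_Iio
  exact ((measurable_betaD r (m-1)).comp (measurable_id.div_const _)).div_const _

lemma bD_eq (r m : ℕ) (hm : 0 < m) (t : ℝ) : betaD r (m-1) (t/m) / m =
    ((m.descFactorial (r+2) : ℝ) / (m:ℝ)^(r+2)) * (t^r * (1 - t/m)^(m-1-(r+1)) / r.factorial) := by
  obtain ⟨n, rfl⟩ : ∃ n, m = n + 1 := ⟨m - 1, by omega⟩
  rw [Nat.succ_descFactorial_succ]
  unfold betaD
  simp only [Nat.add_sub_cancel]
  have : ((n+1 : ℕ) : ℝ) ≠ 0 := by positivity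
  rw [div_pow]
  push_cast at *
  field_simp
  ring

lemma bD_nonneg (r m : ℕ) (t : ℝ) (ht : 0 < t) : 0 ≤ bD r m t := by
  unfold bD
  by_cases h : t ∈ Iio (m:ℝ)
  · rw [indicator_of_mem h]
    have hm : (0:ℝ) < m := ht.trans h
    have : 0 ≤ 1 - t/m := by rw [sub_nonneg, div_le_one hm]; exact le_of_lt h
    unfold betaD
    positivity
  · rw [indicator_of_notMem h]

lemma bD_le (r m : ℕ) (hm : 2 * (r+2) ≤ m) (t : ℝ) (ht : 0 < t) : |bD r m t| ≤ Bd r t := by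
  rw [abs_of_nonneg (bD_nonneg r m t ht)]
  unfold bD
  by_cases h : t ∈ Iio (m:ℝ)
  · rw [indicator_of_mem h, bD_eq r m (by omega)]
    have hm0 : (0:ℝ) < m := ht.trans h
    have h1 : 0 ≤ 1 - t/m := by rw [sub_nonneg, div_le_one hm0]; exact le_of_lt h
    have h2 : ((m.descFactorial (r+2) : ℝ) / (m:ℝ)^(r+2)) ≤ 1 := by
      rw [div_le_one (by positivity)]
      exact_mod_cast Nat.descFactorial_le_pow m (r+2)
    have h3 : (1 - t/m)^(m-1-(r+1)) ≤ rexp (-t/2) := by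
      calc (1 - t/m)^(m-1-(r+1)) ≤ (rexp (-(t/m)))^(m-1-(r+1)) := by
            gcongr
            have := Real.add_one_le_exp (-(t/m)); linarith
        _ = rexp ((m-1-(r+1) : ℕ) * (-(t/m))) := by rw [Real.exp_nat_mul]
        _ ≤ rexp (-t/2) := by
            rw [Real.exp_le_exp]
            have h5 : (m:ℝ) ≤ 2 * ((m-1-(r+1) : ℕ) : ℝ) := by
              exact_mod_cast (by omega : m ≤ 2 * (m-1-(r+1)))
            have h6 : t = m * (t/m) := by field_simp
            have h7 : 0 < t/m := by positivity
            nlinarith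
    calc _ ≤ 1 * (t^r * (1 - t/m)^(m-1-(r+1)) / r.factorial) := by
            gcongr
      _ ≤ Bd r t := by
            unfold Bd
            rw [one_mul]
            gcongr
  · rw [indicator_of_notMem h]
    exact Bd_nonneg r t ht

lemma bD_tendsto (r : ℕ) (t : ℝ) : 
    Tendsto (fun m => bD r m t) atTop (𝓝 (erlD r t)) := by
  have h1 : Tendsto (fun m : ℕ => ((m.descFactorial (r+2) : ℝ) / (m:ℝ)^(r+2))) atTop (𝓝 1) := by
    have := isEquivalent_descFactorial (r+2)
    refine (Asymptotics.isEquivalent_iff_tendsto_one ?_).1 this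
    filter_upwards [eventually_gt_atTop 0] with m hm
    positivity
  have h0 : Tendsto (fun m : ℕ => 1 - t/m) atTop (𝓝 1) := by
    simpa using (tendsto_const_div_atTop_nhds_zero_nat t).const_sub 1
  have h2 : Tendsto (fun m : ℕ => (1 - t/m)^(m-1-(r+1))) atTop (𝓝 (rexp (-t))) := by
    have h3 := Real.tendsto_one_add_div_pow_exp (-t)
    have h4 := h3.div (h0.pow (r+2)) (by norm_num)
    simp only [one_pow, div_one] at h4
    refine h4.congr' ?_
    filter_upwards [eventually_ge_atTop (r+2), h0.eventually_ne one_ne_zero] with m hm hne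
    obtain ⟨k, rfl⟩ := Nat.exists_eq_add_of_le hm
    have e1 : r + 2 + k - 1 - (r+1) = k := by omega
    rw [e1]
    simp only [Pi.div_apply]
    rw [neg_div, ← sub_eq_add_neg, pow_add, mul_div_cancel_left₀ _ (pow_ne_zero _ hne)]
  have h5 := h1.mul ((h2.const_mul (t^r)).div_const (r.factorial : ℝ))
  unfold erlD
  rw [one_mul] at h5
  refine h5.congr' ?_
  obtain ⟨M, hM⟩ := exists_nat_gt t
  filter_upwards [eventually_ge_atTop M, eventually_gt_atTop 0] with m hm hm0
  unfold bD
  rw [indicator_of_mem (show t ∈ Iio (m:ℝ) from lt_of_lt_of_le hM (by exact_mod_cast hm)),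
    bD_eq r m hm0]


/-- the base mean -/
def th (γ : ℝ) {r : ℕ} (K : (Fin (r+1) → ℝ) → ℝ) : ℝ := ∫ v, kk γ K (r+1) (Fin.cons 1 v) ∂(lam r)

/-- two-argument kernel -/
def JJ (γ : ℝ) {r : ℕ} (K : (Fin (r+1) → ℝ) → ℝ) (y : ℝ) (v : Fin r → ℝ) : ℝ :=
  kk γ K (r+2) (Fin.cons y (Fin.cons 1 v))

/-- truncated centred kernel -/
def JP (γ : ℝ) {r : ℕ} (K : (Fin (r+1) → ℝ) → ℝ) (y : ℝ) (v : Fin r → ℝ) : ℝ :=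
  if y < 1 then JJ γ K y v - th γ K else 0

section core
variable (γ : ℝ) {r : ℕ} (K : (Fin (r+1) → ℝ) → ℝ) (hK : Measurable K)

lemma measurable_hvec (n : ℕ) : Measurable (fun (u : Fin n → ℝ) i => hGamma γ (u i)⁻¹) :=
  measurable_pi_lambda _ fun i => (measurable_hGamma γ).comp (measurable_pi_apply i).inv

lemma measurable_base (hK : Measurable K) : 
    Measurable (fun v : Fin r → ℝ => kk γ K (r+1) (Fin.cons 1 v)) :=
  (measurable_kk γ K hK (r+1)).comp (measurable_cons _ _ measurable_const measurable_id)

lemma measurable_JJ (hK : Measurable K) : Measurable (Function.uncurry (JJ γ K)) :=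
  (measurable_kk γ K hK (r+2)).comp (measurable_cons _ _ measurable_fst
    (measurable_cons _ _ measurable_const measurable_snd))

lemma measurable_JP (hK : Measurable K) : Measurable (Function.uncurry (JP γ K)) := by
  have : Function.uncurry (JP γ K) = fun p : ℝ × (Fin r → ℝ) => 
      if p.1 < 1 then JJ γ K p.1 p.2 - th γ K else 0 := rfl
  rw [this]
  exact Measurable.ite (measurableSet_lt measurable_fst measurable_const)
    ((measurable_JJ γ K hK).sub_const _) measurable_const

lemma measurable_Kref (hK : Measurable K) : 
    Measurable (fun z : Fin r → ℝ => K (refVec (q := r+1) z)) :=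
  hK.comp (measurable_pi_lambda _ fun j => measurable_descStat _)

lemma theta_eq (hK : Measurable K) : thetaK γ K = th γ K := by
  unfold thetaK th
  change ∫ z, K (refVec (q := r+1) z) ∂(gpPi γ r) = _
  rw [gpPi_eq γ r, integral_map (measurable_hvec γ r).aemeasurable (measurable_Kref K hK).aestronglyMeasurable]
  apply integral_congr_ae
  filter_upwards [lam_mem r] with u hu
  exact K_refVec γ K u hu

lemma memLp_of_sq {α : Type*} [MeasurableSpace α] (μ : Measure α) (f : α → ℝ) (hf : Measurable f) :
    MemLp f 2 μ ↔ ∫⁻ a, ENNReal.ofReal (f a ^ 2) ∂μ < ⊤ := by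
  rw [memLp_two_iff_integrable_sq hf.aestronglyMeasurable]
  constructor
  · intro h
    rw [← hasFiniteIntegral_iff_ofReal (ae_of_all _ fun a => sq_nonneg _)]
    exact h.2
  · intro h
    refine ⟨(hf.pow_const 2).aestronglyMeasurable, ?_⟩
    rwa [hasFiniteIntegral_iff_ofReal (ae_of_all _ fun a => sq_nonneg _)]

lemma base_memLp (hK : Measurable K) (hMom : MomentCond γ K) : 
    MemLp (fun v => kk γ K (r+1) (Fin.cons 1 v)) 2 (lam r) := by
  rw [memLp_of_sq _ _ (measurable_base γ K hK)]
  have h := hMom 2 (by norm_num)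
  change ∫⁻ z, ENNReal.ofReal (|K (refVec (q := r+1) z)| ^ (2:ℝ)) ∂(gpPi γ r) < ⊤ at h
  rw [gpPi_eq γ r, lintegral_map (by
    apply ENNReal.measurable_ofReal.comp
    exact (measurable_Kref K hK).abs.pow_const _) (measurable_hvec γ r)] at h
  refine lt_of_eq_of_lt (lintegral_congr_ae ?_) h
  filter_upwards [lam_mem r] with u hu
  have e2 := K_refVec γ K u hu
  rw [← e2, Real.rpow_two, sq_abs]
  rfl

lemma map_eq_of_lint {α β : Type*} [MeasurableSpace α] [MeasurableSpace β] (μ : Measure α) (ν : Measure β)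
    (f : α → ℝ) (g : β → ℝ) (hf : Measurable f) (hg : Measurable g)
    (h : ∀ N : ℝ → ℝ≥0∞, Measurable N → ∫⁻ a, N (f a) ∂μ = ∫⁻ b, N (g b) ∂ν) :
    μ.map f = ν.map g := by
  ext E hE
  have := h (E.indicator 1) (measurable_one.indicator hE)
  rw [← lintegral_map (measurable_one.indicator hE) hf, 
    ← lintegral_map (measurable_one.indicator hE) hg] at this
  rwa [lintegral_indicator_one hE, lintegral_indicator_one hE] at this

lemma kk_map (hK : Measurable K) (hLS : LocScaleInvariant K) (n : ℕ) (hn : r + 1 ≤ n) :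
    (lam n).map (kk γ K n) = (lam r).map (fun v => kk γ K (r+1) (Fin.cons 1 v)) :=
  map_eq_of_lint _ _ _ _ (measurable_kk γ K hK n) (measurable_base γ K hK) 
    (fun N hN => kk_law γ K hK hLS N hN n hn)

lemma kk_mean (hK : Measurable K) (hLS : LocScaleInvariant K) (n : ℕ) (hn : r + 1 ≤ n) :
    ∫ w, kk γ K n w ∂(lam n) = th γ K := by
  have h1 := integral_map (μ := lam n) (φ := kk γ K n) (measurable_kk γ K hK n).aemeasurable (f := id) 
    aestronglyMeasurable_id
  have h2 := integral_map (μ := lam r) (measurable_base γ K hK).aemeasurable (f := id) 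
    aestronglyMeasurable_id
  unfold th
  rw [kk_map γ K hK hLS n hn] at h1
  exact h1.symm.trans h2

lemma kk_memLp (hK : Measurable K) (hLS : LocScaleInvariant K) (hMom : MomentCond γ K) 
    (n : ℕ) (hn : r + 1 ≤ n) : MemLp (kk γ K n) 2 (lam n) := by
  have h := base_memLp γ K hK hMom
  rw [memLp_of_sq _ _ (measurable_base γ K hK)] at h
  rw [memLp_of_sq _ _ (measurable_kk γ K hK n), kk_law γ K hK hLS (fun t => ENNReal.ofReal (t^2))
    (by fun_prop) n hn]
  exact h

lemma JP_sq (hK : Measurable K) (hLS : LocScaleInvariant K) (hMom : MomentCond γ K) :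
    ∫⁻ y in Ioi (0:ℝ), ∫⁻ v, ENNReal.ofReal (JP γ K y v ^2) ∂(lam r) < ⊤ := by
  have h := (kk_memLp γ K hK hLS hMom (r+1) le_rfl).sub (memLp_const (th γ K))
  have hm : Measurable (kk γ K (r+1) - fun _ => th γ K) := (measurable_kk γ K hK (r+1)).sub_const _
  have hm2 : Measurable (fun a : Fin (r+1) → ℝ => ENNReal.ofReal ((kk γ K (r+1) - fun _ => th γ K : (Fin (r+1) → ℝ) → ℝ) a ^ 2)) :=
    ENNReal.measurable_ofReal.comp (hm.pow_const 2)
  rw [memLp_of_sq _ _ hm, lam_succ _ _ hm2] at h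
  refine lt_of_eq_of_lt ?_ h
  unfold unif01
  rw [← lintegral_indicator measurableSet_Ioi, ← lintegral_indicator measurableSet_Ioo]
  apply lintegral_congr_ae
  have hne : ∀ᵐ y : ℝ, y ≠ 1 := by simp [ae_iff]
  filter_upwards [hne] with y hy
  by_cases h0 : y ∈ Ioi (0:ℝ)
  · rw [indicator_of_mem h0]
    by_cases h1 : y < 1
    · rw [indicator_of_mem (show y ∈ Ioo (0:ℝ) 1 from ⟨h0, h1⟩)]
      apply lintegral_congr_ae
      filter_upwards [lam_mem r] with v hv
      simp only [JP, if_pos h1, JJ, Pi.sub_apply]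
      rw [kk_drop_lt γ K y h0 h1 v hv]
    · rw [indicator_of_notMem (fun h => h1 h.2)]
      simp [JP, h1]
  · rw [indicator_of_notMem h0, indicator_of_notMem (fun h => h0 h.1)]

lemma rho_integral (hK : Measurable K) (hLS : LocScaleInvariant K) (hMom : MomentCond γ K)
    (d : ℝ → ℝ) (hd : Measurable d) (hd0 : ∀ t, 0 < t → 0 ≤ d t) (hdB : ∀ t, 0 < t → |d t| ≤ Bd r t)
    (ρ : Measure ℝ) [IsProbabilityMeasure ρ]
    (hρ : ρ = (volume.restrict (Ioi 0)).withDensity (fun t => ENNReal.ofReal (d t))) :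
    ∀ᵐ x ∂(volume.restrict (Ioi (0:ℝ))), 
      ∫ p, (JJ γ K (x/p.1) p.2 - th γ K) ∂(ρ.prod (lam r))
        = ∫ p, d p.1 * JP γ K (x/p.1) p.2 ∂((volume.restrict (Ioi (0:ℝ))).prod (lam r)) := by
  have hpos : ∀ᵐ p ∂((volume.restrict (Ioi (0:ℝ))).prod (lam r)), 0 < p.1 :=
    Measure.quasiMeasurePreserving_fst.ae (ae_restrict_mem (measurableSet_Ioi))
  filter_upwards [J_integrable (lam r) r (JP γ K) (measurable_JP γ K hK) (JP_sq γ K hK hLS hMom)] with x hx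
  have hJPx : Measurable (fun p : ℝ × (Fin r → ℝ) => JP γ K (x/p.1) p.2) := 
    (measurable_JP γ K hK).comp ((measurable_fst.const_div x).prodMk measurable_snd)
  have hint : Integrable (fun p : ℝ × (Fin r → ℝ) => d p.1 * JP γ K (x/p.1) p.2) 
      ((volume.restrict (Ioi (0:ℝ))).prod (lam r)) := by
    refine hx.mono ((hd.comp measurable_fst).mul hJPx).aestronglyMeasurable ?_
    filter_upwards [hpos] with p hp
    rw [norm_mul, Real.norm_eq_abs, Real.norm_eq_abs, mul_comm, norm_mul, Real.norm_eq_abs, abs_abs,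
      Real.norm_of_nonneg (Bd_nonneg r _ hp)]
    exact mul_le_mul_of_nonneg_left (hdB p.1 hp) (abs_nonneg _)
  have hdm : Measurable (fun p : ℝ × (Fin r → ℝ) => ENNReal.ofReal (d p.1)) := 
    ENNReal.measurable_ofReal.comp (hd.comp measurable_fst)
  have hprod : ρ.prod (lam r) = ((volume.restrict (Ioi (0:ℝ))).prod (lam r)).withDensity 
      (fun p => ENNReal.ofReal (d p.1)) := by
    rw [hρ]
    have := prod_withDensity_left (μ := volume.restrict (Ioi (0:ℝ))) (ν := lam r) 
      (f := fun t => ENNReal.ofReal (d t)) (ENNReal.measurable_ofReal.comp hd)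
    exact this
  have e1 : ∫ p, JP γ K (x/p.1) p.2 ∂(ρ.prod (lam r)) = 
      ∫ p, d p.1 * JP γ K (x/p.1) p.2 ∂((volume.restrict (Ioi (0:ℝ))).prod (lam r)) := by
    rw [hprod, integral_withDensity_eq_integral_toReal_smul hdm (by simp)]
    apply integral_congr_ae
    filter_upwards [hpos] with p hp
    simp [ENNReal.toReal_ofReal (hd0 p.1 hp)]
  have hint2 : Integrable (fun p : ℝ × (Fin r → ℝ) => JP γ K (x/p.1) p.2) (ρ.prod (lam r)) := by
    rw [hprod, integrable_withDensity_iff_integrable_smul' hdm (by simp)]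
    refine hint.congr ?_
    filter_upwards [hpos] with p hp
    simp [ENNReal.toReal_ofReal (hd0 p.1 hp)]
  rw [← e1]
  let g1 : ℝ → ℝ := fun t => if x/t < 1 then 0 else 1
  let g2 : (Fin r → ℝ) → ℝ := fun v => kk γ K (r+1) (Fin.cons 1 v) - th γ K
  have hg1 : Measurable g1 := Measurable.ite 
    (measurableSet_lt (measurable_id.const_div x) measurable_const) measurable_const measurable_const
  have hg1i : Integrable g1 ρ := by
    refine (integrable_const (1:ℝ)).mono hg1.aestronglyMeasurable (ae_of_all _ fun t => ?_)
    simp only [g1]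
    split_ifs <;> simp
  have hbi : Integrable (fun v => kk γ K (r+1) (Fin.cons 1 v)) (lam r) := 
    (base_memLp γ K hK hMom).integrable (by norm_num)
  have hg2i : Integrable g2 (lam r) := hbi.sub (integrable_const _)
  have hg2z : ∫ v, g2 v ∂(lam r) = 0 := by
    simp only [g2]
    rw [integral_sub hbi (integrable_const _)]
    simp [th]
  have hae : ∀ᵐ p ∂(ρ.prod (lam r)), JJ γ K (x/p.1) p.2 - th γ K 
      = JP γ K (x/p.1) p.2 + g1 p.1 * g2 p.2 := by
    have : ∀ᵐ p ∂(ρ.prod (lam r)), ∀ i, 0 < p.2 i ∧ p.2 i < 1 := 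
      Measure.quasiMeasurePreserving_snd.ae (lam_mem r)
    filter_upwards [this] with p hp
    by_cases h : x / p.1 < 1
    · simp [JP, g1, h]
    · simp only [JP, g1, g2, h, if_false, JJ]
      rw [kk_drop_ge γ K _ (not_lt.1 h) p.2 hp]
      ring
  rw [integral_congr_ae hae, integral_add hint2 (hg1i.mul_prod hg2i), integral_prod_mul, hg2z]
  simp

end core


/-- rescaled law of the threshold -/
def rhoM (r m : ℕ) : Measure ℝ := (volume.restrict (Ioi 0)).withDensity (fun t => ENNReal.ofReal (bD r m t))

section core2
variable (γ : ℝ) {r : ℕ} (K : (Fin (r+1) → ℝ) → ℝ)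

lemma lint_rhoM (r m : ℕ) (hm : 0 < m) (Ψ : ℝ → ℝ≥0∞) (hΨ : Measurable Ψ) :
    ∫⁻ t, Ψ t ∂(rhoM r m) = ∫⁻ t, ENNReal.ofReal (betaD r (m-1) t) * Ψ (m * t) ∂unif01 := by
  have hm0 : (0:ℝ) < m := by exact_mod_cast hm
  have hb : Measurable (fun t => ENNReal.ofReal (bD r m t)) := 
    ENNReal.measurable_ofReal.comp (measurable_bD r m)
  unfold rhoM unif01
  rw [lintegral_withDensity_eq_lintegral_mul _ hb hΨ, ← lintegral_indicator measurableSet_Ioi,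
    ← lintegral_indicator measurableSet_Ioo, lint_scale m hm0 _ ((hb.mul hΨ).indicator measurableSet_Ioi),
    ← lintegral_const_mul' _ _ ENNReal.ofReal_ne_top]
  apply lintegral_congr
  intro t
  by_cases h0 : 0 < t
  · rw [indicator_of_mem (show (m:ℝ) * t ∈ Ioi (0:ℝ) from mul_pos hm0 h0)]
    by_cases h1 : t < 1
    · rw [indicator_of_mem (show t ∈ Ioo (0:ℝ) 1 from ⟨h0, h1⟩)]
      simp only [Pi.mul_apply]
      rw [← mul_assoc, ← ENNReal.ofReal_mul hm0.le]
      congr 2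
      unfold bD
      rw [indicator_of_mem (show (m:ℝ) * t ∈ Iio (m:ℝ) by
        simp only [mem_Iio]; nlinarith), mul_div_cancel_left₀ _ hm0.ne']
      field_simp
    · rw [indicator_of_notMem (fun h => h1 h.2)]
      simp only [Pi.mul_apply]
      unfold bD
      rw [indicator_of_notMem (show (m:ℝ) * t ∉ Iio (m:ℝ) by
        simp only [mem_Iio, not_lt] at *; nlinarith)]
      simp
  · rw [indicator_of_notMem (show (m:ℝ) * t ∉ Ioi (0:ℝ) from fun h => h0 (pos_of_mul_pos_right h hm0.le)), 
      indicator_of_notMem (fun h => h0 h.1), mul_zero]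

lemma measurable_div_left {r : ℕ} (x : ℝ) (J : ℝ → (Fin r → ℝ) → ℝ)
   (hJ : Measurable (Function.uncurry J)) :
    Measurable (fun p : ℝ × (Fin r → ℝ) => J (x/p.1) p.2) := by
  have h1 : Measurable (fun p : ℝ × (Fin r → ℝ) => (x/p.1, p.2)) := 
    (measurable_fst.const_div x).prodMk measurable_snd
  exact hJ.comp h1

lemma measurable_JJx (hK : Measurable K) (x : ℝ) :
    Measurable (fun p : ℝ × (Fin r → ℝ) => JJ γ K (x/p.1) p.2) :=
  measurable_div_left x (JJ γ K) (measurable_JJ γ K hK)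

lemma sfin_rhoM (r m : ℕ) : SFinite (rhoM r m) := by unfold rhoM; infer_instance

lemma law_cons (hK : Measurable K) (hLS : LocScaleInvariant K) (N : ℝ → ℝ≥0∞) (hN : Measurable N)
    (n : ℕ) (hn : r + 1 ≤ n) (x : ℝ) (hx : 0 < x) :
    ∫⁻ w, N (kk γ K (n+1) (Fin.cons (x/(n+1:ℕ)) w)) ∂(lam n) = 
      ∫⁻ p, N (JJ γ K (x/p.1) p.2) ∂((rhoM r (n+1)).prod (lam r)) := by
  have := sfin_rhoM r (n+1)
  have hm : Measurable (fun p : ℝ × (Fin r → ℝ) => N (JJ γ K (x/p.1) p.2)) := 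
    hN.comp (measurable_JJx γ K hK x)
  have hn0 : (0:ℝ) < (n+1:ℕ) := by positivity
  rw [lintegral_prod _ hm.aemeasurable, lint_rhoM r (n+1) (by omega) _ hm.lintegral_prod_right',
    kk_law_cons γ K hK hLS N hN n hn _ (div_pos hx hn0)]
  simp only [Nat.add_sub_cancel]
  apply lintegral_congr
  intro t
  simp only [JJ, div_div]

lemma prob_rhoM (n : ℕ) (hn : r + 1 ≤ n) : IsProbabilityMeasure (rhoM r (n+1)) := by
  have := sfin_rhoM r (n+1)
  have h := law_cons 0 (fun _ : Fin (r+1) → ℝ => (0:ℝ)) measurable_const (fun _ _ _ _ => rfl) (fun _ => 1)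
    measurable_const n hn 1 one_pos
  rw [lintegral_prod _ (by fun_prop)] at h
  simp at h
  exact ⟨h.symm⟩

lemma alpha_eq (hK : Measurable K) (hLS : LocScaleInvariant K) (hMom : MomentCond γ K)
    (n : ℕ) (hn : 2 * (r + 2) ≤ n) :
    ∀ᵐ x ∂(volume.restrict (Ioi (0:ℝ))), 
      ∫ w, (kk γ K (n+1) (Fin.cons (x/(n+1:ℕ)) w) - th γ K) ∂(lam n)
        = ∫ p, bD r (n+1) p.1 * JP γ K (x/p.1) p.2 ∂((volume.restrict (Ioi (0:ℝ))).prod (lam r)) := by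
  have := prob_rhoM (r := r) n (by omega)
  filter_upwards [rho_integral γ K hK hLS hMom (bD r (n+1)) (measurable_bD r (n+1)) 
    (fun t ht => bD_nonneg r (n+1) t ht) (fun t ht => bD_le r (n+1) (by omega) t ht) (rhoM r (n+1)) rfl,
    ae_restrict_mem measurableSet_Ioi] with x hx hx0
  rw [← hx]
  have hm1 : Measurable (fun w : Fin n → ℝ => kk γ K (n+1) (Fin.cons (x/(n+1:ℕ)) w)) :=
    (measurable_kk γ K hK (n+1)).comp (measurable_cons _ _ measurable_const measurable_id)
  have hmap := map_eq_of_lint _ _ _ _ hm1 (measurable_JJx γ K hK x) 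
    (fun N hN => law_cons γ K hK hLS N hN n (by omega) x hx0)
  have hs : AEStronglyMeasurable (fun s : ℝ => s - th γ K) ((lam n).map 
    (fun w : Fin n → ℝ => kk γ K (n+1) (Fin.cons (x/(n+1:ℕ)) w))) := by fun_prop
  rw [← integral_map hm1.aemeasurable hs, hmap, integral_map (measurable_JJx γ K hK x).aemeasurable (by fun_prop)]

lemma erlD_le (r : ℕ) (t : ℝ) (ht : 0 < t) : |erlD r t| ≤ Bd r t := by
  rw [abs_of_nonneg (by unfold erlD; positivity)]
  unfold erlD Bd
  gcongr
  linarith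

lemma sigma_eq (hK : Measurable K) (hLS : LocScaleInvariant K) (hMom : MomentCond γ K) :
    sigmaSqK γ K = ∫ x in Ioi (0:ℝ), 
      (∫ p, erlD r p.1 * JP γ K (x/p.1) p.2 ∂((volume.restrict (Ioi (0:ℝ))).prod (lam r)))^2 := by
  unfold sigmaSqK
  apply integral_congr_ae
  filter_upwards [rho_integral γ K hK hLS hMom (erlD r) (measurable_erlD r)
    (fun t ht => by unfold erlD; positivity) (erlD_le r) (erlangMeasure (r+1)) (erlang_eq r)] with x hx
  rw [← hx]
  congr 1
  rw [theta_eq γ K hK]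
  change ∫ zs : (Fin r → ℝ) × ℝ, (Km K (r+1+1) (Fin.snoc (refVec (q := r+1) zs.1) (hGamma γ (zs.2 / x))) - th γ K)
      ∂((gpPi γ r).prod (erlangMeasure (r+1))) = _
  have hprod : (gpPi γ r).prod (erlangMeasure (r+1)) = ((lam r).prod (erlangMeasure (r+1))).map 
      (Prod.map (fun u i => hGamma γ (u i)⁻¹) id) := by
    rw [← Measure.map_prod_map _ _ (measurable_hvec γ r) measurable_id, Measure.map_id, gpPi_eq]
  have hms : Measurable (fun zs : (Fin r → ℝ) × ℝ => 
      Km K (r+1+1) (Fin.snoc (refVec (q := r+1) zs.1) (hGamma γ (zs.2 / x))) - th γ K) := by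
    apply Measurable.sub_const
    apply (measurable_Km K hK _).comp
    apply measurable_pi_lambda
    intro i
    refine Fin.lastCases ?_ (fun i => ?_) i
    · simp only [Fin.snoc_last]
      exact (measurable_hGamma γ).comp (measurable_snd.div_const x)
    · simp only [Fin.snoc_castSucc]
      exact (measurable_descStat _).comp measurable_fst
  rw [hprod, integral_map ((measurable_hvec γ r).prodMap measurable_id).aemeasurable hms.aestronglyMeasurable,
    ← integral_prod_swap]
  apply integral_congr_ae
  have : ∀ᵐ p ∂((erlangMeasure (r+1)).prod (lam r)), ∀ i, 0 < p.2 i ∧ p.2 i < 1 := 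
    Measure.quasiMeasurePreserving_snd.ae (lam_mem r)
  filter_upwards [this] with p hp
  have e := Km_refVec γ K p.2 hp p.1 x
  simp only [Prod.swap, Prod.map, id, JJ]
  rw [← e]
  rfl

end core2


section core3
variable (γ : ℝ) {r : ℕ} (K : (Fin (r+1) → ℝ) → ℝ)

lemma Km_snoc_cons {n : ℕ} (hn : r + 1 ≤ n + 1) (a : Fin n → ℝ) (x : ℝ) :
    Km K (n+1) (Fin.snoc a x) = Km K (n+1) (Fin.cons x a) := by
  apply Km_congr K hn hn
  intro t j _
  rw [cnt_cons, cnt_snoc, add_comm]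

lemma mp_cons (n : ℕ) : MeasurePreserving (fun p : ℝ × (Fin n → ℝ) => (Fin.cons p.1 p.2 : Fin (n+1) → ℝ))
    (unif01.prod (lam n)) (lam (n+1)) := by
  have hm : Measurable (fun p : ℝ × (Fin n → ℝ) => (Fin.cons p.1 p.2 : Fin (n+1) → ℝ)) :=
    measurable_cons _ _ measurable_fst measurable_snd
  refine ⟨hm, ?_⟩
  ext E hE
  have hi : Measurable (E.indicator (1 : (Fin (n+1) → ℝ) → ℝ≥0∞)) := measurable_one.indicator hE
  have hi2 : Measurable (fun p : ℝ × (Fin n → ℝ) => 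
      E.indicator (1 : (Fin (n+1) → ℝ) → ℝ≥0∞) (Fin.cons p.1 p.2)) := hi.comp hm
  rw [← lintegral_indicator_one hE, ← lintegral_indicator_one hE, lintegral_map hi hm,
    lam_succ n _ hi, lintegral_prod _ hi2.aemeasurable]

lemma second_moment (hK : Measurable K) (hLS : LocScaleInvariant K) (hMom : MomentCond γ K)
    (n : ℕ) (hn : r + 1 ≤ n) :
    (∫ p : ℝ × ((Fin n → ℝ) × (Fin n → ℝ)), kk γ K (n+1) (Fin.cons p.1 p.2.1) * 
      kk γ K (n+1) (Fin.cons p.1 p.2.2) ∂(unif01.prod ((lam n).prod (lam n)))) - th γ K * th γ K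
    = ∫ u, (∫ w, (kk γ K (n+1) (Fin.cons u w) - th γ K) ∂(lam n))^2 ∂unif01 := by
  let k : ℝ × (Fin n → ℝ) → ℝ := fun p => kk γ K (n+1) (Fin.cons p.1 p.2)
  have hk : MemLp k 2 (unif01.prod (lam n)) := 
    (kk_memLp γ K hK hLS hMom (n+1) (by omega)).comp_measurePreserving (mp_cons n)
  have hp1 : MeasurePreserving (Prod.map (id : ℝ → ℝ) (Prod.fst : (Fin n → ℝ) × (Fin n → ℝ) → _)) 
      (unif01.prod ((lam n).prod (lam n))) (unif01.prod (lam n)) := 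
    (MeasurePreserving.id _).prod measurePreserving_fst
  have hp2 : MeasurePreserving (Prod.map (id : ℝ → ℝ) (Prod.snd : (Fin n → ℝ) × (Fin n → ℝ) → _)) 
      (unif01.prod ((lam n).prod (lam n))) (unif01.prod (lam n)) := 
    (MeasurePreserving.id _).prod measurePreserving_snd
  have hint : Integrable (fun p : ℝ × ((Fin n → ℝ) × (Fin n → ℝ)) => k (p.1, p.2.1) * k (p.1, p.2.2))
      (unif01.prod ((lam n).prod (lam n))) :=
    (hk.comp_measurePreserving hp1).integrable_mul (hk.comp_measurePreserving hp2)
  have hki : Integrable k (unif01.prod (lam n)) := hk.integrable (by norm_num)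
  let a : ℝ → ℝ := fun u => ∫ w, k (u, w) ∂(lam n)
  have hai : Integrable a unif01 := hki.integral_prod_left
  have ha2 : Integrable (fun u => a u ^ 2) unif01 := by
    refine hint.integral_prod_left.congr (ae_of_all _ fun u => ?_)
    simp only
    rw [integral_prod_mul (fun w => k (u, w)) (fun w => k (u, w)), sq]
  have e1 : (∫ p : ℝ × ((Fin n → ℝ) × (Fin n → ℝ)), k (p.1, p.2.1) * k (p.1, p.2.2)
      ∂(unif01.prod ((lam n).prod (lam n)))) = ∫ u, a u ^ 2 ∂unif01 := by
    rw [integral_prod _ hint]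
    apply integral_congr_ae
    refine ae_of_all _ fun u => ?_
    simp only
    rw [integral_prod_mul (fun w => k (u, w)) (fun w => k (u, w)), sq]
  have e2 : ∫ u, a u ∂unif01 = th γ K := by
    rw [← integral_prod _ hki, ← kk_mean γ K hK hLS (n+1) (by omega), ← (mp_cons n).map_eq,
      integral_map (mp_cons n).measurable.aemeasurable (measurable_kk γ K hK (n+1)).aestronglyMeasurable]
  have e3 : ∀ᵐ u ∂unif01, (∫ w, (kk γ K (n+1) (Fin.cons u w) - th γ K) ∂(lam n))^2 
      = a u ^ 2 - 2 * th γ K * a u + th γ K ^ 2 := by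
    filter_upwards [hki.prod_right_ae] with u hu
    rw [integral_sub hu (integrable_const _)]
    simp only [integral_const, probReal_univ, one_smul]
    change (a u - th γ K)^2 = _
    ring
  change (∫ p : ℝ × ((Fin n → ℝ) × (Fin n → ℝ)), k (p.1, p.2.1) * k (p.1, p.2.2)
      ∂(unif01.prod ((lam n).prod (lam n)))) - _ = _
  have ha3 : Integrable (fun u => a u ^ 2 - 2 * th γ K * a u) unif01 := ha2.sub (hai.const_mul _)
  rw [e1, integral_congr_ae e3, integral_add ha3 (integrable_const _), 
    integral_sub ha2 (hai.const_mul _), integral_const_mul, e2]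
  simp
  ring

variable {Ω : Type*} [MeasurableSpace Ω] (P : Measure Ω) [IsProbabilityMeasure P]
  (Z : ℕ → Ω → ℝ)

lemma vec_law (hZmeas : ∀ i, Measurable (Z i)) (hIndep : iIndepFun Z P)
    (hDist : ∀ i, Measure.map (Z i) P = gpMeasure γ) (n s : ℕ) :
    P.map (fun ω (i : Fin n) => Z (s + i) ω) = (lam n).map (fun u i => hGamma γ (u i)⁻¹) := by
  have hinj : Function.Injective (fun i : Fin n => s + (i:ℕ)) := by
    intro i j h
    apply Fin.ext
    simpa using h
  have h := (iIndepFun_iff_map_fun_eq_pi_map (fun i => (hZmeas _).aemeasurable)).1 (hIndep.precomp hinj)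
  rw [h]
  simp only [hDist]
  exact gpPi_eq γ n

lemma joint_law (hZmeas : ∀ i, Measurable (Z i)) (hIndep : iIndepFun Z P)
    (hDist : ∀ i, Measure.map (Z i) P = gpMeasure γ) (n : ℕ) :
    P.map (fun ω => (Z n ω, ((fun i : Fin n => Z i ω), (fun i : Fin n => Z (n + 1 + i) ω))))
      = (unif01.prod ((lam n).prod (lam n))).map (Prod.map (fun u => hGamma γ u⁻¹) 
        (Prod.map (fun u i => hGamma γ (u i)⁻¹) (fun u i => hGamma γ (u i)⁻¹))) := by
  have hA : Measurable (fun ω => fun i : Fin n => Z i ω) := measurable_pi_lambda _ fun i => hZmeas _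
  have hB : Measurable (fun ω => fun i : Fin n => Z (n+1+i) ω) := measurable_pi_lambda _ fun i => hZmeas _
  have i1 : IndepFun (fun ω => fun i : Fin n => Z i ω) (fun ω => fun i : Fin n => Z (n+1+i) ω) P := by
    have h := hIndep.indepFun_finset (Finset.range n) (Finset.Ico (n+1) (n+1+n)) (by
      rw [Finset.disjoint_left]; intro a ha hb; simp at ha hb; omega) hZmeas
    have := h.comp (φ := fun f (i : Fin n) => f ⟨i, by simp⟩) 
      (ψ := fun f (i : Fin n) => f ⟨n+1+i, by simp⟩) 
      (measurable_pi_lambda _ fun i => measurable_pi_apply _) 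
      (measurable_pi_lambda _ fun i => measurable_pi_apply _) 
    exact this
  have i2 : IndepFun (Z n) 
      (fun ω => ((fun i : Fin n => Z i ω), (fun i : Fin n => Z (n+1+i) ω))) P := by
    have h := hIndep.indepFun_finset {n} (Finset.range n ∪ Finset.Ico (n+1) (n+1+n)) (by
      rw [Finset.disjoint_left]; intro a ha hb; simp at ha hb; omega) hZmeas
    have hψ : Measurable (fun f : (↥(Finset.range n ∪ Finset.Ico (n+1) (n+1+n)) → ℝ) => 
        ((fun i : Fin n => f ⟨i, by simp⟩), (fun i : Fin n => f ⟨n+1+i, by simp⟩))) := by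
      apply Measurable.prodMk
      · exact measurable_pi_lambda _ fun i => measurable_pi_apply _
      · exact measurable_pi_lambda _ fun i => measurable_pi_apply _
    have hφ : Measurable (fun f : (↥({n} : Finset ℕ) → ℝ) => f ⟨n, by simp⟩) := measurable_pi_apply _
    have := h.comp (φ := fun f => f ⟨n, by simp⟩) 
      (ψ := fun f => ((fun i : Fin n => f ⟨i, by simp⟩), (fun i : Fin n => f ⟨n+1+i, by simp⟩))) 
      hφ hψ
    exact this
  have hh : Measurable (fun u => hGamma γ u⁻¹) := (measurable_hGamma γ).comp measurable_inv
  have hv := measurable_hvec γ n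
  have l1 := vec_law γ P Z hZmeas hIndep hDist n 0
  simp only [zero_add] at l1
  rw [(indepFun_iff_map_prod_eq_prod_map_map (hZmeas n).aemeasurable (hA.prodMk hB).aemeasurable).1 i2,
    (indepFun_iff_map_prod_eq_prod_map_map hA.aemeasurable hB.aemeasurable).1 i1, l1,
    vec_law γ P Z hZmeas hIndep hDist n (n+1), hDist, gp_eq,
    Measure.map_prod_map _ _ hv hv, Measure.map_prod_map _ _ hh (hv.prodMap hv)]

lemma zeta_eq (hK : Measurable K) (hLS : LocScaleInvariant K) (hMom : MomentCond γ K)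
    (hZmeas : ∀ i, Measurable (Z i)) (hIndep : iIndepFun Z P)
    (hDist : ∀ i, Measure.map (Z i) P = gpMeasure γ) (n : ℕ) (hn : r + 1 ≤ n) :
    zetaCov P K Z (n+1) 1 
      = ∫ u, (∫ w, (kk γ K (n+1) (Fin.cons u w) - th γ K) ∂(lam n))^2 ∂unif01 := by
  rw [← second_moment γ K hK hLS hMom n hn]
  have mean : ∀ s : ℕ, ∫ ω, Km K (n+1) (fun i : Fin (n+1) => Z (s + i) ω) ∂P = th γ K := by
    intro s
    have hm : Measurable (fun ω (i : Fin (n+1)) => Z (s + i) ω) := measurable_pi_lambda _ fun i => hZmeas _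
    rw [← kk_mean γ K hK hLS (n+1) (by omega)]
    have h1 := integral_map (μ := P) hm.aemeasurable (measurable_Km K hK (n+1)).aestronglyMeasurable
    rw [← h1, vec_law γ P Z hZmeas hIndep hDist (n+1) s, 
      integral_map (measurable_hvec γ (n+1)).aemeasurable (measurable_Km K hK (n+1)).aestronglyMeasurable]
    rfl
  have m0 := mean 0
  simp only [zero_add] at m0
  have mn := mean n
  unfold zetaCov
  simp only [Nat.add_sub_cancel]
  rw [m0, mn]
  congr 1
  let F : ℝ × ((Fin n → ℝ) × (Fin n → ℝ)) → ℝ := fun p => 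
    Km K (n+1) (Fin.cons p.1 p.2.1) * Km K (n+1) (Fin.cons p.1 p.2.2)
  have hF : Measurable F := 
    ((measurable_Km K hK (n+1)).comp (measurable_cons _ _ measurable_fst measurable_snd.fst)).mul
     ((measurable_Km K hK (n+1)).comp (measurable_cons _ _ measurable_fst measurable_snd.snd))
  have hmT : Measurable (fun ω => (Z n ω, ((fun i : Fin n => Z i ω), (fun i : Fin n => Z (n + 1 + i) ω)))) :=
    (hZmeas n).prodMk ((measurable_pi_lambda _ fun i => hZmeas _).prodMk 
      (measurable_pi_lambda _ fun i => hZmeas _))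
  have e : ∀ ω, Km K (n+1) (fun i : Fin (n+1) => Z i ω) * Km K (n+1) (fun i : Fin (n+1) => Z (n + i) ω)
      = F (Z n ω, ((fun i : Fin n => Z i ω), (fun i : Fin n => Z (n + 1 + i) ω))) := by
    intro ω
    simp only [F]
    rw [← Km_snoc_cons K (by omega)]
    congr 2
    · funext i
      refine Fin.lastCases ?_ (fun i => ?_) i <;> simp
    · funext i
      refine Fin.cases ?_ (fun i => ?_) i
      · simp
      · simp only [Fin.cons_succ, Fin.val_succ]
        congr 1
        omega
  have hh : Measurable (fun u => hGamma γ u⁻¹) := (measurable_hGamma γ).comp measurable_inv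
  have hv := measurable_hvec γ n
  simp only [e]
  rw [← integral_map (f := F) hmT.aemeasurable hF.aestronglyMeasurable, joint_law γ P Z hZmeas hIndep hDist n,
    integral_map (hh.prodMap (hv.prodMap hv)).aemeasurable hF.aestronglyMeasurable]
  apply integral_congr_ae
  refine ae_of_all _ fun p => ?_
  simp only [F, kk, hcons, Prod.map]

lemma mzeta_eq (hK : Measurable K) (hLS : LocScaleInvariant K) (hMom : MomentCond γ K)
    (hZmeas : ∀ i, Measurable (Z i)) (hIndep : iIndepFun Z P)
    (hDist : ∀ i, Measure.map (Z i) P = gpMeasure γ) (n : ℕ) (hn : 2 * (r + 2) ≤ n) :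
    ((n+1 : ℕ) : ℝ) * zetaCov P K Z (n+1) 1 
      = ∫ x in Ioi (0:ℝ), (∫ p, bD r (n+1) p.1 * JP γ K (x/p.1) p.2
         ∂((volume.restrict (Ioi (0:ℝ))).prod (lam r)))^2 := by
  rw [zeta_eq γ K P Z hK hLS hMom hZmeas hIndep hDist n (by omega)]
  have hn0 : (0:ℝ) < (n+1:ℕ) := by positivity
  set m : ℝ := ((n+1:ℕ) : ℝ) with hmdef
  have hpos : ∀ᵐ p ∂((volume.restrict (Ioi (0:ℝ))).prod (lam r)), 0 < p.1 :=
    Measure.quasiMeasurePreserving_fst.ae (ae_restrict_mem (measurableSet_Ioi))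
  unfold unif01
  have h1 := Measure.integral_comp_div ((Ioo (0:ℝ) 1).indicator 
    (fun u => (∫ w, (kk γ K (n+1) (Fin.cons u w) - th γ K) ∂(lam n))^2)) m
  rw [abs_of_pos hn0, smul_eq_mul] at h1
  rw [← integral_indicator measurableSet_Ioo, ← h1, ← integral_indicator measurableSet_Ioi]
  apply integral_congr_ae
  have h2 := (ae_restrict_iff' measurableSet_Ioi).1 (alpha_eq γ K hK hLS hMom n hn)
  filter_upwards [h2] with x hx
  by_cases h0 : x ∈ Ioi (0:ℝ)
  · rw [indicator_of_mem h0]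
    by_cases hxm : x < m
    · rw [indicator_of_mem (show x / m ∈ Ioo (0:ℝ) 1 from ⟨div_pos h0 hn0, (div_lt_one hn0).2 hxm⟩), ← hx h0]
    · rw [indicator_of_notMem (fun h => hxm ((div_lt_one hn0).1 h.2))]
      have : ∫ p, bD r (n+1) p.1 * JP γ K (x/p.1) p.2
         ∂((volume.restrict (Ioi (0:ℝ))).prod (lam r)) = 0 := by
        apply integral_eq_zero_of_ae
        filter_upwards [hpos] with p hp
        by_cases hpm : p.1 < m
        · have : ¬ (x / p.1 < 1) := by
            rw [div_lt_one hp]; push Not at hxm ⊢; linarith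
          simp [JP, this]
        · unfold bD
          rw [indicator_of_notMem (show p.1 ∉ Iio (((n+1:ℕ)) : ℝ) from hpm)]
          simp
      rw [this]
      simp
  · rw [indicator_of_notMem h0, indicator_of_notMem (fun h => h0 ?_)]
    have := mul_pos h.1 hn0
    rwa [div_mul_cancel₀ _ hn0.ne'] at this

end core3

/-- Proposition: limit of `m ζ_{m,1}`.
Under the kernel conditions, `lim_{m→∞} m ζ_{m,1} = σ²_K(γ)`. -/
theorem limit_m_zeta_m_one
    {Ω : Type*} [MeasurableSpace Ω] (P : Measure Ω) [IsProbabilityMeasure P]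
    (γ : ℝ) (q : ℕ) (hq : 3 ≤ q)
    (K : (Fin q → ℝ) → ℝ) (hKmeas : Measurable K)
    (hLS : LocScaleInvariant K)
    (hNonconst : ∃ x y : Fin q → ℝ, K x ≠ K y)
    (hMom : MomentCond γ K)
    (Z : ℕ → Ω → ℝ) (hZmeas : ∀ i, Measurable (Z i))
    (hIndep : iIndepFun Z P)
    (hDist : ∀ i, Measure.map (Z i) P = gpMeasure γ) :
    Tendsto (fun m : ℕ => (m : ℝ) * zetaCov P K Z m 1) atTop (𝓝 (sigmaSqK γ K)) := by
  obtain ⟨r, rfl⟩ : ∃ r, q = r + 1 := ⟨q - 1, by omega⟩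
  rw [sigma_eq γ K hKmeas hLS hMom]
  have h := analytic_limit (lam r) r (JP γ K) (measurable_JP γ K hKmeas) (JP_sq γ K hKmeas hLS hMom)
    (bD r) (measurable_bD r) (erlD r)
    (by filter_upwards [eventually_ge_atTop (2 * (r+2))] with m hm t ht using bD_le r m hm t ht)
    (fun t _ => bD_tendsto r t)
  refine h.congr' ?_
  filter_upwards [eventually_ge_atTop (2 * (r+2) + 1)] with m hm
  obtain ⟨n, rfl⟩ : ∃ n, m = n + 1 := ⟨m - 1, by omega⟩
  exact (mzeta_eq γ K P Z hKmeas hLS hMom hZmeas hIndep hDist n (by omega)).symm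

end
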